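/- arXiv:1710.10892 — 6 statements merged into one kernel-verified Lean document; each statement's English description precedes it below -/
import Mathlib

section
/- Let s = (s_1,…,s_n) be a sequence of positive integers. The s-lecture hall polytope P_n^(s) is Gorenstein if and only if there exists c ∈ ℤ^{n+1} such that c_1 = 1, c_j·s_{j−1} = c_{j−1}·s_j + gcd(s_{j−1}, s_j) for all 2 ≤ j ≤ n, and c_{n+1}·s_n = 1 + c_n. -/
open scoped BigOperators

noncomputable section

/-- The `s`-lecture hall polytope
`P_n^(s) = { x ∈ ℝ^n : 0 ≤ x_1/s_1 ≤ x_2/s_2 ≤ ⋯ ≤ x_n/s_n ≤ 1 }` (indices 0-based in Lean). -/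
def lhp (n : ℕ) (s : Fin n → ℤ) : Set (Fin n → ℝ) :=
  {x | (∀ i : Fin n, (i : ℕ) = 0 → 0 ≤ x i / (s i : ℝ)) ∧
       (∀ i j : Fin n, (j : ℕ) = (i : ℕ) + 1 → x i / (s i : ℝ) ≤ x j / (s j : ℝ)) ∧
       (∀ i : Fin n, (i : ℕ) = n - 1 → x i / (s i : ℝ) ≤ 1)}

/-- The vertex `(0,…,0,s_i,s_{i+1},…,s_n)` of the lecture hall polytope (real version). -/
def lhpVertexR (n : ℕ) (s : Fin n → ℤ) (i : Fin n) : Fin n → ℝ :=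
  fun j => if i ≤ j then (s j : ℝ) else 0

/-- The vertex `(0,…,0,s_i,s_{i+1},…,s_n)` of the lecture hall polytope (integer version). -/
def lhpVertexZ (n : ℕ) (s : Fin n → ℤ) (i : Fin n) : Fin n → ℤ :=
  fun j => if i ≤ j then s j else 0

/-- `cone(P_n^(s)) = span_{ℝ≥0} { (v,1) : v a vertex of P_n^(s) } ⊆ ℝ^{n+1}`:
the set of nonnegative combinations of `(0,1)` and the `(v_i,1)`. -/
def lhpCone (n : ℕ) (s : Fin n → ℤ) : Set (Fin (n + 1) → ℝ) :=
  {x | ∃ (a : ℝ) (b : Fin n → ℝ), 0 ≤ a ∧ (∀ i, 0 ≤ b i) ∧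
      x = a • (Fin.snoc (0 : Fin n → ℝ) 1 : Fin (n + 1) → ℝ) +
        ∑ i : Fin n, b i • (Fin.snoc (lhpVertexR n s i) 1 : Fin (n + 1) → ℝ)}

/-- Lattice points of `cone(P_n^(s))`. -/
def lhpConeZ (n : ℕ) (s : Fin n → ℤ) : Set (Fin (n + 1) → ℤ) :=
  {x | (fun i => (x i : ℝ)) ∈ lhpCone n s}

/-- Lattice points of the (relative) interior of `cone(P_n^(s))`
(the cone is full-dimensional, so the relative interior is the interior). -/
def lhpConeInteriorZ (n : ℕ) (s : Fin n → ℤ) : Set (Fin (n + 1) → ℤ) :=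
  {x | (fun i => (x i : ℝ)) ∈ interior (lhpCone n s)}

/-- `P_n^(s)` is Gorenstein: some integer point `c` satisfies
`c + (cone(P) ∩ ℤ^{n+1}) = cone(P)° ∩ ℤ^{n+1}`. -/
def IsGorenstein (n : ℕ) (s : Fin n → ℤ) : Prop :=
  ∃ c : Fin (n + 1) → ℤ,
    (fun x => c + x) '' lhpConeZ n s = lhpConeInteriorZ n s

/-- `P_n^(s)` is level: finitely many integer points `c_1,…,c_m`, all with the same
last coordinate, satisfy `⋃ (c_i + (cone(P) ∩ ℤ^{n+1})) = cone(P)° ∩ ℤ^{n+1}`. -/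
def IsLevel (n : ℕ) (s : Fin n → ℤ) : Prop :=
  ∃ C : Finset (Fin (n + 1) → ℤ), C.Nonempty ∧
    (∀ c ∈ C, ∀ c' ∈ C, c (Fin.last n) = c' (Fin.last n)) ∧
    (⋃ c ∈ C, (fun x => c + x) '' lhpConeZ n s) = lhpConeInteriorZ n s

/-- The `t`-lecture hall cone `C_m^(t) = { x ∈ ℝ^m : 0 ≤ x_1/t_1 ≤ ⋯ ≤ x_m/t_m }`. -/
def lhCone (m : ℕ) (t : Fin m → ℤ) : Set (Fin m → ℝ) :=
  {x | (∀ i : Fin m, (i : ℕ) = 0 → 0 ≤ x i / (t i : ℝ)) ∧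
       (∀ i j : Fin m, (j : ℕ) = (i : ℕ) + 1 → x i / (t i : ℝ) ≤ x j / (t j : ℝ))}

/-- `e` is an `s`-inversion sequence: `0 ≤ e_i < s_i` for all `i`. -/
def IsInvSeq (n : ℕ) (s : Fin n → ℤ) (e : Fin n → ℤ) : Prop :=
  ∀ i, 0 ≤ e i ∧ e i < s i

/-- The ratio `e_i / s_i` as a rational number. -/
def invRatio (n : ℕ) (s e : Fin n → ℤ) (i : Fin n) : ℚ := (e i : ℚ) / (s i : ℚ)

/-- The ratio `e_{i-1}/s_{i-1}`, with the convention `e_0 = 0`, `s_0 = 1`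
(paper 1-based indexing; here 0-based). -/
def prevRatio (n : ℕ) (s e : Fin n → ℤ) (i : Fin n) : ℚ :=
  if (i : ℕ) = 0 then 0
  else invRatio n s e ⟨(i : ℕ) - 1, lt_of_le_of_lt (Nat.sub_le _ _) i.isLt⟩

/-- The ascent set `Asc(e) ⊆ {0,…,n-1}` of an inversion sequence. -/
def ascSet (n : ℕ) (s e : Fin n → ℤ) : Finset (Fin n) :=
  Finset.univ.filter fun i => prevRatio n s e i < invRatio n s e i

/-- The number of ascents of an inversion sequence. -/
def asc (n : ℕ) (s e : Fin n → ℤ) : ℕ := (ascSet n s e).card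

/-- Addition of inversion sequences: componentwise mod `s_i`,
with representative in `{0,…,s_i - 1}`. -/
def invAdd (n : ℕ) (s : Fin n → ℤ) (e e' : Fin n → ℤ) : Fin n → ℤ :=
  fun i => (e i + e' i) % s i

/-- `hStar n s k = # I_{n,k}^(s)`, the number of `s`-inversion sequences with `k` ascents
(the `k`-th coefficient of the `s`-Eulerian polynomial). -/
def hStar (n : ℕ) (s : Fin n → ℤ) (k : ℕ) : ℕ :=
  Nat.card {e : Fin n → ℤ // IsInvSeq n s e ∧ asc n s e = k}

/-- `s` is `u`-generated by a sequence `u` of positive integers: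
`s_2 = u_1 s_1 - 1` and `s_{i+1} = u_i s_i - s_{i-1}` for `i > 1`. -/
def IsUGenerated (n : ℕ) (s : Fin n → ℤ) : Prop :=
  ∃ u : Fin n → ℤ,
    (∀ i : Fin n, (i : ℕ) < n - 1 → 0 < u i) ∧
    (∀ k j : Fin n, (j : ℕ) = (k : ℕ) + 1 → (k : ℕ) = 0 → s j = u k * s k - 1) ∧
    (∀ a k j : Fin n, (k : ℕ) = (a : ℕ) + 1 → (j : ℕ) = (k : ℕ) + 1 →
      s j = u k * s k - s a)

/-- The (half-open) fundamental parallelepiped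
`Π = { Σ η_i (v_i,1) : 0 ≤ η_i < 1 }` of `P_n^(s)`. -/
def fpp (n : ℕ) (s : Fin n → ℤ) : Set (Fin (n + 1) → ℝ) :=
  {x | ∃ (a : ℝ) (b : Fin n → ℝ),
      (0 ≤ a ∧ a < 1) ∧ (∀ i, 0 ≤ b i ∧ b i < 1) ∧
      x = a • (Fin.snoc (0 : Fin n → ℝ) 1 : Fin (n + 1) → ℝ) +
        ∑ i : Fin n, b i • (Fin.snoc (lhpVertexR n s i) 1 : Fin (n + 1) → ℝ)}

/-- The lattice point `λ(e) ∈ ℤ^{n+1}` associated to an inversion sequence `e`: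
`λ(e)_j = ℓ_j s_j - e_j` with `ℓ_j = #(Asc(e) ∩ {0,…,j-1})` (paper 1-based `j`),
and last coordinate `asc(e)`. -/
def lamOf (n : ℕ) (s : Fin n → ℤ) (e : Fin n → ℤ) : Fin (n + 1) → ℤ :=
  Fin.snoc
    (fun j : Fin n =>
      (((ascSet n s e).filter fun i : Fin n => (i : ℕ) ≤ (j : ℕ)).card : ℤ) * s j - e j)
    (asc n s e : ℤ)

/-- A coefficient sequence `h` (of a polynomial `Σ h_j z^j` of degree `r`) is palindromic:
`h_r ≠ 0`, `h_k = 0` for `k > r`, and `h_j = h_{r-j}` for `0 ≤ j ≤ r`. -/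
def IsPalindromic (h : ℕ → ℕ) : Prop :=
  ∃ r : ℕ, h r ≠ 0 ∧ (∀ k, r < k → h k = 0) ∧ ∀ j, j ≤ r → h j = h (r - j)

end

/-- The extended sequence `1, s_1, …, s_n, 1, 1, …`. -/
def extT (n : ℕ) (s : Fin n → ℤ) : ℕ → ℤ
  | 0 => 1
  | k + 1 => if h : k < n then s ⟨k, h⟩ else 1

/-- The extended point `0, x_1, …, x_{n+1}, 0, …`. -/
def extX {R : Type} [CommRing R] (n : ℕ) (x : Fin (n + 1) → R) : ℕ → R
  | 0 => 0
  | k + 1 => if h : k < n + 1 then x ⟨k, h⟩ else 0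

/-- The facet functionals (not divided by the gcd). -/
def facD {R : Type} [CommRing R] (n : ℕ) (s : Fin n → ℤ) (k : ℕ) (x : Fin (n + 1) → R) : R :=
  (extT n s k : R) * extX n x (k + 1) - (extT n s (k + 1) : R) * extX n x k

theorem extT_pos (n : ℕ) (s : Fin n → ℤ) (hs : ∀ i, 0 < s i) (k : ℕ) : 0 < extT n s k := by
  cases k with
  | zero => simp [extT]
  | succ k =>
    simp only [extT]
    split_ifs
    · exact hs _
    · norm_num

theorem extX_add {R : Type} [CommRing R] (n : ℕ) (x y : Fin (n + 1) → R) (k : ℕ) :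
    extX n (x + y) k = extX n x k + extX n y k := by
  cases k with
  | zero => simp [extX]
  | succ k => simp only [extX]; split_ifs <;> simp

theorem extX_smul {R : Type} [CommRing R] (n : ℕ) (a : R) (x : Fin (n + 1) → R) (k : ℕ) :
    extX n (a • x) k = a * extX n x k := by
  cases k with
  | zero => simp [extX]
  | succ k => simp only [extX]; split_ifs <;> simp

theorem extX_cast (n : ℕ) (x : Fin (n + 1) → ℤ) (k : ℕ) :
    extX n (fun i => (x i : ℝ)) k = ((extX n x k : ℤ) : ℝ) := by
  cases k with
  | zero => simp [extX]
  | succ k => simp only [extX]; split_ifs <;> simp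

theorem facD_add {R : Type} [CommRing R] (n : ℕ) (s : Fin n → ℤ) (k : ℕ) (x y : Fin (n + 1) → R) :
    facD n s k (x + y) = facD n s k x + facD n s k y := by
  simp only [facD, extX_add]; ring

theorem facD_smul {R : Type} [CommRing R] (n : ℕ) (s : Fin n → ℤ) (k : ℕ) (a : R)
    (x : Fin (n + 1) → R) :
    facD n s k (a • x) = a * facD n s k x := by
  simp only [facD, extX_smul]; ring

theorem facD_cast (n : ℕ) (s : Fin n → ℤ) (k : ℕ) (x : Fin (n + 1) → ℤ) :
    facD n s k (fun i => (x i : ℝ)) = ((facD n s k x : ℤ) : ℝ) := by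
  simp only [facD, extX_cast]; push_cast; rfl

/-- The point with extended sequence `X`. -/
def ofSeq {R : Type} (n : ℕ) (X : ℕ → R) : Fin (n + 1) → R := fun i => X (i + 1)

theorem facD_seq {R : Type} [CommRing R] (n : ℕ) (s : Fin n → ℤ) (k : ℕ) (hk : k ≤ n)
    (X : ℕ → R) (h0 : X 0 = 0) :
    facD n s k (ofSeq n X) =
      (extT n s k : R) * X (k + 1) - (extT n s (k + 1) : R) * X k := by
  have h : ∀ j, j ≤ n + 1 → extX n (ofSeq n X) j = X j := by
    intro j hj
    cases j with
    | zero => simp [extX, h0]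
    | succ j => simp only [extX, ofSeq]; rw [dif_pos (by omega)]
  rw [facD, h _ (by omega), h _ (by omega)]

theorem gen_apply (n : ℕ) (s : Fin n → ℤ) (a : ℝ) (b : Fin n → ℝ) (j : Fin (n + 1)) :
    (a • (Fin.snoc (0 : Fin n → ℝ) 1 : Fin (n + 1) → ℝ) +
        ∑ i : Fin n, b i • (Fin.snoc (lhpVertexR n s i) 1 : Fin (n + 1) → ℝ)) j =
      (extT n s (j + 1) : ℝ) *
        ∑ i ∈ Finset.range (j + 1), (if h : i < n then b ⟨i, h⟩ else a) := by
  have key : ∀ f : Fin n → ℝ, ∑ i : Fin n, f i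
      = ∑ i ∈ Finset.range n, if h : i < n then f ⟨i, h⟩ else 0 := by
    intro f
    rw [Finset.sum_range]
    simp
  refine Fin.lastCases ?_ (fun j => ?_) j
  · simp only [Pi.add_apply, Pi.smul_apply, Finset.sum_apply, Fin.snoc_last, Fin.val_last,
      smul_eq_mul, mul_one, extT]
    rw [Finset.sum_range_succ, key]
    simp only [lt_irrefl, dite_false, Int.cast_one, one_mul]
    rw [add_comm]
    congr 1
    apply Finset.sum_congr rfl
    intro i hi
    rw [Finset.mem_range] at hi
    simp [hi]
  · simp only [Pi.add_apply, Pi.smul_apply, Finset.sum_apply, Fin.snoc_castSucc, Fin.val_castSucc,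
      smul_eq_mul, extT, lhpVertexR, Pi.zero_apply, mul_zero, zero_add]
    rw [dif_pos j.2, key, Finset.mul_sum]
    have hsub : Finset.range (j + 1) ⊆ Finset.range n := by
      intro i hi
      rw [Finset.mem_range] at *
      omega
    rw [← Finset.sum_subset hsub]
    · apply Finset.sum_congr rfl
      intro i hi
      rw [Finset.mem_range] at hi
      have : i < n := by omega
      rw [dif_pos this, dif_pos this, if_pos (by rw [Fin.le_def]; simp; omega), mul_comm]
    · intro i hi hi'
      rw [Finset.mem_range] at *
      rw [dif_pos hi, if_neg (by rw [Fin.le_def]; simp; omega), mul_zero]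

theorem mem_lhpCone (n : ℕ) (s : Fin n → ℤ) (hs : ∀ i, 0 < s i) (x : Fin (n + 1) → ℝ) :
    x ∈ lhpCone n s ↔ ∀ k ≤ n, 0 ≤ facD n s k x := by
  have hT : ∀ k, (0 : ℝ) < extT n s k := fun k => by exact_mod_cast extT_pos n s hs k
  constructor
  · rintro ⟨a, b, ha, hb, hx⟩ k hk
    have hx' : x = ofSeq n (fun k : ℕ => (extT n s k : ℝ) *
        ∑ i ∈ Finset.range k, (if h : i < n then b ⟨i, h⟩ else a)) := by
      rw [hx]; funext j; exact gen_apply n s a b j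
    rw [hx', facD_seq n s k hk _ (by simp), Finset.sum_range_succ]
    have : 0 ≤ (if h : k < n then b ⟨k, h⟩ else a) := by
      split_ifs
      · exact hb _
      · exact ha
    have := mul_nonneg (mul_nonneg (hT k).le (hT (k + 1)).le) this
    linarith
  · intro h
    set r : ℕ → ℝ := fun k => extX n x k / extT n s k with hr
    have hb : ∀ k ≤ n, 0 ≤ r (k + 1) - r k := by
      intro k hk
      have h1 := h k hk
      have : r (k + 1) - r k = facD n s k x / (extT n s k * extT n s (k + 1)) := by
        have := (hT k).ne'
        have := (hT (k + 1)).ne'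
        simp only [hr, facD]; field_simp
      rw [this]
      exact div_nonneg h1 (mul_pos (hT _) (hT _)).le
    refine ⟨r (n + 1) - r n, fun i => r (i + 1) - r i, hb n le_rfl, fun i => hb i i.2.le, ?_⟩
    funext j
    rw [gen_apply]
    have : ∑ i ∈ Finset.range (j + 1), (if h : i < n then r ((⟨i, h⟩ : Fin n) + 1) -
        r (⟨i, h⟩ : Fin n) else r (n + 1) - r n) = r (j + 1) := by
      have : ∑ i ∈ Finset.range (j + 1 : ℕ), (r (i + 1) - r i) = r (j + 1) := by
        rw [Finset.sum_range_sub]; simp [hr, extX]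
      rw [← this]
      apply Finset.sum_congr rfl
      intro i hi
      rw [Finset.mem_range] at hi
      split_ifs with h
      · rfl
      · have : i = n := by omega
        rw [this]
    rw [this]
    simp only [hr]
    rw [mul_div_cancel₀ _ (hT _).ne']
    simp only [extX]
    rw [dif_pos j.2]

theorem continuous_facD (n : ℕ) (s : Fin n → ℤ) (k : ℕ) :
    Continuous (fun x : Fin (n + 1) → ℝ => facD n s k x) := by
  have h : ∀ k, Continuous (fun x : Fin (n + 1) → ℝ => extX n x k) := by
    intro k
    cases k with
    | zero => simp only [extX]; fun_prop
    | succ k => simp only [extX]; split_ifs <;> fun_prop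
  exact ((h _).const_mul _).sub ((h _).const_mul _)

theorem mem_interior_lhpCone (n : ℕ) (s : Fin n → ℤ) (hs : ∀ i, 0 < s i) (x : Fin (n + 1) → ℝ) :
    x ∈ interior (lhpCone n s) ↔ ∀ k ≤ n, 0 < facD n s k x := by
  have hT : ∀ k, (0 : ℝ) < extT n s k := fun k => by exact_mod_cast extT_pos n s hs k
  constructor
  · intro hx k hk
    set w : Fin (n + 1) → ℝ :=
      ofSeq n (fun k : ℕ => (extT n s k : ℝ) * (k : ℝ)) with hw
    have hwp : 0 < facD n s k w := by
      rw [hw, facD_seq n s k hk _ (by simp)]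
      have := mul_pos (hT k) (hT (k + 1))
      push_cast
      linarith
    have hc : Filter.Tendsto (fun t : ℝ => x + (-t) • w) (nhdsWithin 0 (Set.Ioi 0)) (nhds x) := by
      have : Continuous (fun t : ℝ => x + (-t) • w) := by fun_prop
      have h2 := this.tendsto 0
      simp only [neg_zero, zero_smul, add_zero] at h2
      exact h2.mono_left nhdsWithin_le_nhds
    have hev := hc.eventually (mem_interior_iff_mem_nhds.mp hx)
    obtain ⟨t, ht, htp⟩ := (hev.and self_mem_nhdsWithin).exists
    have := (mem_lhpCone n s hs _).mp ht k hk
    rw [facD_add, facD_smul] at this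
    have := mul_pos (Set.mem_Ioi.mp htp) hwp
    linarith
  · intro h
    refine mem_interior.mpr ⟨⋂ k ∈ Finset.range (n + 1), {y | 0 < facD n s k y}, ?_, ?_, ?_⟩
    · intro y hy
      rw [mem_lhpCone n s hs]
      intro k hk
      simp only [Set.mem_iInter, Finset.mem_range, Set.mem_ofPred_eq] at hy
      exact (hy k (by omega)).le
    · apply isOpen_biInter_finset
      intro k _
      exact isOpen_lt continuous_const (continuous_facD n s k)
    · simp only [Set.mem_iInter, Finset.mem_range, Set.mem_ofPred_eq]
      intro k hk
      exact h k (by omega)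

theorem mem_lhpConeZ (n : ℕ) (s : Fin n → ℤ) (hs : ∀ i, 0 < s i) (x : Fin (n + 1) → ℤ) :
    x ∈ lhpConeZ n s ↔ ∀ k ≤ n, 0 ≤ facD n s k x := by
  rw [lhpConeZ, Set.mem_ofPred_eq, mem_lhpCone n s hs]
  simp only [facD_cast, Int.cast_nonneg_iff]

theorem mem_lhpConeInteriorZ (n : ℕ) (s : Fin n → ℤ) (hs : ∀ i, 0 < s i) (x : Fin (n + 1) → ℤ) :
    x ∈ lhpConeInteriorZ n s ↔ ∀ k ≤ n, 0 < facD n s k x := by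
  rw [lhpConeInteriorZ, Set.mem_ofPred_eq, mem_interior_lhpCone n s hs]
  simp only [facD_cast, Int.cast_pos]

theorem gcd_dvd_facD (n : ℕ) (s : Fin n → ℤ) (k : ℕ) (x : Fin (n + 1) → ℤ) :
    (Int.gcd (extT n s k) (extT n s (k + 1)) : ℤ) ∣ facD n s k x := by
  simp only [facD, Int.cast_id]
  exact dvd_sub ((Int.gcd_dvd_left _ _).mul_right _) ((Int.gcd_dvd_right _ _).mul_right _)

/-- An interior lattice point at lattice distance one from the `i`-th facet. -/
theorem exists_near (n : ℕ) (s : Fin n → ℤ) (hs : ∀ i, 0 < s i) (i : ℕ) (hi : i ≤ n) :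
    ∃ y : Fin (n + 1) → ℤ, (∀ k ≤ n, 0 < facD n s k y) ∧
      facD n s i y = Int.gcd (extT n s i) (extT n s (i + 1)) := by
  have hz : ∃ z : Fin (n + 1) → ℤ, facD n s i z = Int.gcd (extT n s i) (extT n s (i + 1)) := by
    rcases Nat.eq_zero_or_pos i with rfl | hip
    · refine ⟨ofSeq n (fun k : ℕ => if k = 1 then (1 : ℤ) else 0), ?_⟩
      rw [facD_seq n s 0 hi _ (by simp)]
      simp [extT]
    · refine ⟨ofSeq n (fun k : ℕ => if k = i + 1 then
          Int.gcdA (extT n s i) (extT n s (i + 1)) else if k = i then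
          -Int.gcdB (extT n s i) (extT n s (i + 1)) else 0), ?_⟩
      rw [facD_seq n s i hi _ (by simp; omega), Int.gcd_eq_gcd_ab]
      simp
  obtain ⟨z, hz⟩ := hz
  set w : Fin (n + 1) → ℤ :=
    ofSeq n (fun k : ℕ => extT n s k * ((k : ℤ) - if i < k then 1 else 0)) with hw
  have hwi : facD n s i w = 0 := by
    rw [hw, facD_seq n s i hi _ (by simp)]
    simp
    ring
  have hwk : ∀ k ≤ n, k ≠ i → 1 ≤ facD n s k w := by
    intro k hk hki
    rw [hw, facD_seq n s k hk _ (by simp)]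
    have : 0 < extT n s k * extT n s (k + 1) := mul_pos (extT_pos n s hs _) (extT_pos n s hs _)
    by_cases h : i < k
    · have h' : i < k + 1 := by omega
      simp only [h, h', if_true, Int.cast_id]
      push_cast
      linarith
    · have h' : ¬ i < k + 1 := by omega
      simp only [h, h', if_false, Int.cast_id]
      push_cast
      linarith
  set N : ℤ := 1 + ∑ j ∈ Finset.range (n + 1), |facD n s j z| with hN
  refine ⟨z + N • w, ?_, ?_⟩
  · intro k hk
    rw [facD_add, facD_smul]
    by_cases hki : k = i
    · subst hki
      rw [hwi, hz, mul_zero, add_zero]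
      exact_mod_cast Int.gcd_pos_of_ne_zero_left _ (extT_pos n s hs _).ne'
    · have h1 : |facD n s k z| ≤ ∑ j ∈ Finset.range (n + 1), |facD n s j z| :=
        Finset.single_le_sum (f := fun j => |facD n s j z|) (fun _ _ => abs_nonneg _)
          (Finset.mem_range.mpr (by omega))
      have h2 := neg_abs_le (facD n s k z)
      have h3 := abs_nonneg (facD n s k z)
      have h4 := hwk k hk hki
      have h5 : 0 ≤ N := by omega
      nlinarith
  · rw [facD_add, facD_smul, hwi, hz, mul_zero, add_zero]

theorem gorenstein_iff_facD (n : ℕ) (s : Fin n → ℤ) (hs : ∀ i, 0 < s i) (c : Fin (n + 1) → ℤ) :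
    (fun x => c + x) '' lhpConeZ n s = lhpConeInteriorZ n s ↔
      ∀ k ≤ n, facD n s k c = Int.gcd (extT n s k) (extT n s (k + 1)) := by
  have hg : ∀ k, (0 : ℤ) < Int.gcd (extT n s k) (extT n s (k + 1)) := fun k => by
    exact_mod_cast Int.gcd_pos_of_ne_zero_left _ (extT_pos n s hs _).ne'
  have hzero : ∀ k, facD n s k (0 : Fin (n + 1) → ℤ) = 0 := fun k => by
    have := facD_smul n s k (0 : ℤ) (0 : Fin (n + 1) → ℤ)
    simpa using this
  constructor
  · intro h i hi
    obtain ⟨y, hy, hyi⟩ := exists_near n s hs i hi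
    have hy' := (mem_lhpConeInteriorZ n s hs y).mpr hy
    rw [← h] at hy'
    obtain ⟨x, hx, rfl⟩ := hy'
    have hx' := (mem_lhpConeZ n s hs x).mp hx i hi
    simp only [facD_add] at hyi
    have hc : c ∈ lhpConeInteriorZ n s := by
      rw [← h]
      refine ⟨0, ?_, by simp⟩
      rw [mem_lhpConeZ n s hs]
      intro k _
      rw [hzero]
    have hc' := (mem_lhpConeInteriorZ n s hs c).mp hc i hi
    have := Int.le_of_dvd hc' (gcd_dvd_facD n s i c)
    omega
  · intro h
    ext y
    rw [mem_lhpConeInteriorZ n s hs]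
    constructor
    · rintro ⟨x, hx, rfl⟩ k hk
      have := (mem_lhpConeZ n s hs x).mp hx k hk
      have h2 := hg k
      simp only [facD_add, h k hk]
      omega
    · intro hy
      refine ⟨y - c, ?_, by simp⟩
      rw [mem_lhpConeZ n s hs]
      intro k hk
      have h1 : facD n s k y = facD n s k c + facD n s k (y - c) := by
        rw [← facD_add]; simp
      have h2 := Int.le_of_dvd (hy k hk) (gcd_dvd_facD n s k y)
      rw [h k hk] at h1
      omega

theorem facD_conditions (n : ℕ) (s : Fin n → ℤ) (c : Fin (n + 1) → ℤ) :
    (∀ k ≤ n, facD n s k c = Int.gcd (extT n s k) (extT n s (k + 1))) ↔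
      (c 0 = 1 ∧
        (∀ k j : Fin n, (j : ℕ) = (k : ℕ) + 1 →
          c j.castSucc * s k = c k.castSucc * s j + (Int.gcd (s k) (s j) : ℤ)) ∧
        (∀ i : Fin n, (i : ℕ) = n - 1 →
          c (Fin.last n) * s i = 1 + c i.castSucc)) := by
  have e0 : facD n s 0 c = c 0 := by simp [facD, extT, extX]
  have eT : ∀ k : Fin n, extT n s (k + 1) = s k := fun k => by simp [extT]
  have eX : ∀ k : Fin n, extX n c (k + 1) = c k.castSucc := fun k => by
    simp only [extX]; rw [dif_pos (by omega)]; rfl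
  have eL : extX n c (n + 1) = c (Fin.last n) := by
    simp only [extX]; rw [dif_pos (by omega)]; rfl
  have eTL : extT n s (n + 1) = 1 := by simp [extT]
  constructor
  · intro h
    refine ⟨?_, ?_, ?_⟩
    · have := h 0 (by omega)
      rw [e0] at this
      simpa [extT] using this
    · intro k j hkj
      have := h j j.2.le
      rw [facD, eT j, eX j, hkj, eT k, eX k] at this
      simp only [Int.cast_id] at this
      linarith
    · intro i hi
      have hn : n = i + 1 := by omega
      have := h n le_rfl
      rw [facD, eTL, eL] at this
      have e1 : extT n s n = s i := by rw [← eT i]; congr 1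
      have e2 : extX n c n = c i.castSucc := by rw [← eX i]; congr 1
      rw [e1, e2] at this
      simp at this
      linarith
  · rintro ⟨h0, h1, h2⟩ k hk
    cases k with
    | zero => rw [e0, h0]; simp [extT]
    | succ k =>
      have hkn : k < n := hk
      have a1 := eT ⟨k, hkn⟩
      have a2 := eX ⟨k, hkn⟩
      simp only at a1 a2
      rcases Nat.lt_or_ge (k + 1) n with hlt | hge
      · have b1 := eT ⟨k + 1, hlt⟩
        have b2 := eX ⟨k + 1, hlt⟩
        simp only at b1 b2
        have := h1 ⟨k, hkn⟩ ⟨k + 1, hlt⟩ rfl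
        rw [facD, a1, a2, b1, b2]
        simp only [Int.cast_id]
        linarith
      · have hn : k + 1 = n := by omega
        have := h2 ⟨k, hkn⟩ (by simp; omega)
        have b1 : extT n s (k + 1 + 1) = 1 := by rw [hn]; exact eTL
        have b2 : extX n c (k + 1 + 1) = c (Fin.last n) := by
          rw [show k + 1 + 1 = n + 1 by omega]; exact eL
        rw [facD, a1, a2, b1, b2]
        simp only [Int.cast_id, Int.gcd_one, Nat.cast_one]
        linarith

theorem lhp_gorenstein_iff (n : ℕ) (s : Fin n → ℤ) (hs : ∀ i, 0 < s i) :
    IsGorenstein n s ↔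
      ∃ c : Fin (n + 1) → ℤ,
        c 0 = 1 ∧
        (∀ k j : Fin n, (j : ℕ) = (k : ℕ) + 1 →
          c j.castSucc * s k = c k.castSucc * s j + (Int.gcd (s k) (s j) : ℤ)) ∧
        (∀ i : Fin n, (i : ℕ) = n - 1 →
          c (Fin.last n) * s i = 1 + c i.castSucc) := by
  exact exists_congr fun c =>
    (gorenstein_iff_facD n s hs c).trans (facD_conditions n s c)
end

section
/- Let s = (s_1,…,s_n) be a sequence of positive integers such that gcd(s_{i−1}, s_i) = 1 for some index 1 < i ≤ n, and let ←s := (s_n, s_{n−1}, …, s_1). Then the s-lecture hall polytope P_n^(s) is Gorenstein if and only if there exist c, d ∈ ℤ^n with c_1 = d_1 = 1 satisfying c_j·s_{j−1} = c_{j−1}·s_j + gcd(s_{j−1}, s_j) and d_j·(←s)_{j−1} = d_{j−1}·(←s)_j + gcd((←s)_{j−1}, (←s)_j) for all 2 ≤ j ≤ n. -/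
open scoped BigOperators

namespace LHP

def S (n : ℕ) (s : Fin n → ℤ) : ℕ → ℤ
  | 0 => 1
  | k + 1 => if h : k < n then s ⟨k, h⟩ else 1

def X {R : Type*} [Zero R] (n : ℕ) (x : Fin (n + 1) → R) : ℕ → R
  | 0 => 0
  | k + 1 => if h : k < n + 1 then x ⟨k, h⟩ else 0

def comb (n : ℕ) (s : Fin n → ℤ) (a : ℝ) (b : Fin n → ℝ) : Fin (n + 1) → ℝ :=
  a • (Fin.snoc (0 : Fin n → ℝ) 1 : Fin (n + 1) → ℝ) +
        ∑ i : Fin n, b i • (Fin.snoc (lhpVertexR n s i) 1 : Fin (n + 1) → ℝ)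

def B (n : ℕ) (a : ℝ) (b : Fin n → ℝ) (i : ℕ) : ℝ := if h : i < n then b ⟨i, h⟩ else a

lemma S_pos (n : ℕ) (s : Fin n → ℤ) (hs : ∀ i, 0 < s i) (k : ℕ) : 0 < S n s k := by
  cases k with
  | zero => simp [S]
  | succ k =>
    simp only [S]
    split_ifs with h
    · exact hs _
    · norm_num

lemma S_posR (n : ℕ) (s : Fin n → ℤ) (hs : ∀ i, 0 < s i) (k : ℕ) : (0 : ℝ) < S n s k := by
  exact_mod_cast S_pos n s hs k

lemma X_inj {R : Type*} [Zero R] (n : ℕ) (x y : Fin (n + 1) → R)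
    (h : ∀ k ≤ n + 1, X n x k = X n y k) : x = y := by
  funext i
  have := h (i + 1) (by omega)
  simpa only [X, i.2, dif_pos] using this

lemma comb_castSucc (n : ℕ) (s : Fin n → ℤ) (a : ℝ) (b : Fin n → ℝ) (j : Fin n) :
    comb n s a b j.castSucc = s j * ∑ i ∈ Finset.range (j + 1), B n a b i := by
  have h1 : comb n s a b j.castSucc = ∑ i : Fin n, (if (i : ℕ) ≤ j then B n a b i * s j else 0) := by
    simp only [comb, Pi.add_apply, Pi.smul_apply, Finset.sum_apply, Fin.snoc_castSucc, lhpVertexR,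
      Pi.zero_apply, smul_eq_mul, mul_zero, zero_add]
    refine Finset.sum_congr rfl fun i _ => ?_
    simp only [B, Fin.le_def, i.2, dif_pos, mul_ite, mul_zero]
  rw [h1, Fin.sum_univ_eq_sum_range (fun i => if i ≤ (j : ℕ) then B n a b i * s j else 0) n,
    ← Finset.sum_filter, Finset.mul_sum]
  refine Finset.sum_congr ?_ fun i _ => mul_comm _ _
  ext i
  simp only [Finset.mem_filter, Finset.mem_range]
  omega

lemma comb_last (n : ℕ) (s : Fin n → ℤ) (a : ℝ) (b : Fin n → ℝ) :
    comb n s a b (Fin.last n) = ∑ i ∈ Finset.range (n + 1), B n a b i := by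
  rw [Finset.sum_range_succ, ← Fin.sum_univ_eq_sum_range]
  simp [comb, B, add_comm]

lemma X_comb (n : ℕ) (s : Fin n → ℤ) (a : ℝ) (b : Fin n → ℝ) (k : ℕ) (hk : k ≤ n + 1) :
    X n (comb n s a b) k = S n s k * ∑ i ∈ Finset.range k, B n a b i := by
  cases k with
  | zero => simp [X]
  | succ k =>
    by_cases h : k < n
    · have := comb_castSucc n s a b ⟨k, h⟩
      have h' : k < n + 1 := by omega
      simp only [X, S, h, h', dif_pos]
      exact this
    · obtain rfl : k = n := by omega
      have := comb_last k s a b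
      simp only [X, S, lt_irrefl, dif_neg, not_false_eq_true, Nat.lt_succ_self, dif_pos]
      simpa [Fin.last] using this

/-- facet functionals -/
def E (n : ℕ) (s : Fin n → ℤ) (x : Fin (n + 1) → ℝ) (i : ℕ) : ℝ :=
  S n s i * X n x (i + 1) - S n s (i + 1) * X n x i

lemma mem_cone_iff (n : ℕ) (s : Fin n → ℤ) (hs : ∀ i, 0 < s i) (x : Fin (n + 1) → ℝ) :
    x ∈ lhpCone n s ↔ ∀ i ≤ n, 0 ≤ E n s x i := by
  constructor
  · rintro ⟨a, b, ha, hb, rfl⟩ i hi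
    change 0 ≤ E n s (comb n s a b) i
    unfold E
    rw [X_comb _ _ _ _ _ (by omega), X_comb _ _ _ _ _ (by omega), Finset.sum_range_succ]
    have hB : 0 ≤ B n a b i := by
      unfold B; split_ifs; exacts [hb _, ha]
    have := mul_nonneg (mul_pos (S_posR n s hs i) (S_posR n s hs (i+1))).le hB
    linarith
  · intro h
    let Y : ℕ → ℝ := fun k => X n x k / S n s k
    have hY : ∀ i ≤ n, 0 ≤ Y (i + 1) - Y i := by
      intro i hi
      have h1 := S_posR n s hs i
      have h2 := S_posR n s hs (i+1)
      have := h i hi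
      unfold E at this
      simp only [Y]
      rw [sub_nonneg, div_le_div_iff₀ h1 h2]
      linarith
    refine ⟨Y (n + 1) - Y n, fun i => Y (i + 1) - Y i, hY n le_rfl, fun i => hY i i.2.le, ?_⟩
    change x = comb n s _ _
    apply X_inj
    intro k hk
    rw [X_comb _ _ _ _ _ hk]
    have : ∑ i ∈ Finset.range k, B n (Y (n + 1) - Y n) (fun i => Y (i + 1) - Y i) i
        = ∑ i ∈ Finset.range k, (Y (i + 1) - Y i) := by
      refine Finset.sum_congr rfl fun i hi => ?_
      have := Finset.mem_range.1 hi
      unfold B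
      split_ifs with h
      · rfl
      · obtain rfl : i = n := by omega
        rfl
    rw [this, Finset.sum_range_sub]
    have := S_posR n s hs k
    simp only [Y, X]
    field_simp
    simp

lemma X_cont (n : ℕ) (k : ℕ) : Continuous fun x : Fin (n + 1) → ℝ => X n x k := by
  cases k with
  | zero => simpa [X] using continuous_const
  | succ k =>
    simp only [X]
    split_ifs
    · exact continuous_apply _
    · exact continuous_const

lemma E_cont (n : ℕ) (s : Fin n → ℤ) (k : ℕ) : Continuous fun x => E n s x k := by
  unfold E
  exact (continuous_const.mul (X_cont n _)).sub (continuous_const.mul (X_cont n _))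

/-- lattice point with prescribed ratios -/
def mk (n : ℕ) (s : Fin n → ℤ) (z : ℕ → ℤ) : Fin (n + 1) → ℤ :=
  fun i => S n s (i + 1) * z (i + 1)

lemma X_mk (n : ℕ) (s : Fin n → ℤ) (z : ℕ → ℤ) (hz : z 0 = 0) (k : ℕ) (hk : k ≤ n + 1) :
    X n (mk n s z) k = S n s k * z k := by
  cases k with
  | zero => simp [X, hz]
  | succ k =>
    have h' : k < n + 1 := by omega
    simp [X, mk, h']

lemma X_cast (n : ℕ) (x : Fin (n + 1) → ℤ) (k : ℕ) :
    X n (fun i => (x i : ℝ)) k = ((X n x k : ℤ) : ℝ) := by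
  cases k with
  | zero => simp [X]
  | succ k => simp only [X]; split_ifs <;> simp

lemma X_add {R : Type*} [Ring R] (n : ℕ) (x y : Fin (n + 1) → R) (k : ℕ) :
    X n (x + y) k = X n x k + X n y k := by
  cases k with
  | zero => simp [X]
  | succ k => simp only [X]; split_ifs <;> simp

lemma X_smul {R : Type*} [Ring R] (n : ℕ) (a : R) (y : Fin (n + 1) → R) (k : ℕ) :
    X n (a • y) k = a * X n y k := by
  cases k with
  | zero => simp [X]
  | succ k => simp only [X]; split_ifs <;> simp

def EZ (n : ℕ) (s : Fin n → ℤ) (x : Fin (n + 1) → ℤ) (i : ℕ) : ℤ :=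
  S n s i * X n x (i + 1) - S n s (i + 1) * X n x i

lemma E_cast (n : ℕ) (s : Fin n → ℤ) (x : Fin (n + 1) → ℤ) (k : ℕ) :
    E n s (fun i => (x i : ℝ)) k = (EZ n s x k : ℝ) := by
  simp [E, EZ, X_cast]

lemma EZ_add (n : ℕ) (s : Fin n → ℤ) (x y : Fin (n + 1) → ℤ) (k : ℕ) :
    EZ n s (x + y) k = EZ n s x k + EZ n s y k := by
  simp only [EZ, X_add]; ring

lemma EZ_smul (n : ℕ) (s : Fin n → ℤ) (a : ℤ) (y : Fin (n + 1) → ℤ) (k : ℕ) :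
    EZ n s (a • y) k = a * EZ n s y k := by
  simp only [EZ, X_smul]; ring

lemma EZ_mk (n : ℕ) (s : Fin n → ℤ) (z : ℕ → ℤ) (hz : z 0 = 0) (k : ℕ) (hk : k ≤ n) :
    EZ n s (mk n s z) k = S n s k * S n s (k + 1) * (z (k + 1) - z k) := by
  simp only [EZ]
  rw [X_mk _ _ _ hz _ (by omega), X_mk _ _ _ hz _ (by omega)]
  ring

lemma mem_int_iff (n : ℕ) (s : Fin n → ℤ) (hs : ∀ i, 0 < s i) (x : Fin (n + 1) → ℝ) :
    x ∈ interior (lhpCone n s) ↔ ∀ i ≤ n, 0 < E n s x i := by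
  constructor
  · intro hx i hi
    let v : Fin (n + 1) → ℝ := fun i => ((mk n s (fun k => (k : ℤ)) i : ℤ) : ℝ)
    have hv : E n s v i = S n s i * S n s (i + 1) := by
      simp only [v]
      rw [E_cast, EZ_mk _ _ _ (by simp) _ hi]
      push_cast; ring
    have hc : Continuous fun ε : ℝ => x + (-ε) • v := by fun_prop
    have h0 : ∀ᶠ ε in nhds (0 : ℝ), x + (-ε) • v ∈ lhpCone n s := by
      apply hc.continuousAt.eventually_mem
      simpa [mem_interior_iff_mem_nhds] using hx
    have h1 : ∀ᶠ ε in nhdsWithin (0 : ℝ) (Set.Ioi 0), x + (-ε) • v ∈ lhpCone n s :=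
      h0.filter_mono nhdsWithin_le_nhds
    obtain ⟨ε, h2, h3⟩ := (h1.and self_mem_nhdsWithin).exists
    have h4 := (mem_cone_iff n s hs _).1 h2 i hi
    have h5 : E n s (x + (-ε) • v) i = E n s x i - ε * E n s v i := by
      simp only [E, X_add, X_smul]; ring
    rw [h5, hv] at h4
    have := mul_pos (Set.mem_Ioi.1 h3) (mul_pos (S_posR n s hs i) (S_posR n s hs (i+1)))
    linarith
  · intro h
    have ho : IsOpen {x : Fin (n + 1) → ℝ | ∀ i ∈ Finset.range (n + 1), 0 < E n s x i} := by
      have : {x : Fin (n + 1) → ℝ | ∀ i ∈ Finset.range (n + 1), 0 < E n s x i}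
          = ⋂ i ∈ Finset.range (n + 1), {x | 0 < E n s x i} := by
        ext; simp
      rw [this]
      exact isOpen_biInter_finset fun i _ => isOpen_lt continuous_const (E_cont n s i)
    refine interior_maximal ?_ ho ?_
    · intro y hy
      rw [mem_cone_iff n s hs]
      exact fun i hi => (hy i (Finset.mem_range.2 (by omega))).le
    · intro i hi
      exact h i (by have := Finset.mem_range.1 hi; omega)

lemma memZ (n : ℕ) (s : Fin n → ℤ) (hs : ∀ i, 0 < s i) (x : Fin (n + 1) → ℤ) :
    x ∈ lhpConeZ n s ↔ ∀ i ≤ n, 0 ≤ EZ n s x i := by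
  change _ ∈ lhpCone n s ↔ _
  rw [mem_cone_iff n s hs]
  simp only [E_cast, Int.cast_nonneg_iff]

lemma memIZ (n : ℕ) (s : Fin n → ℤ) (hs : ∀ i, 0 < s i) (x : Fin (n + 1) → ℤ) :
    x ∈ lhpConeInteriorZ n s ↔ ∀ i ≤ n, 0 < EZ n s x i := by
  change _ ∈ interior (lhpCone n s) ↔ _
  rw [mem_int_iff n s hs]
  simp only [E_cast, Int.cast_pos]

def G (n : ℕ) (s : Fin n → ℤ) (i : ℕ) : ℤ := Int.gcd (S n s i) (S n s (i + 1))

lemma G_dvd (n : ℕ) (s : Fin n → ℤ) (x : Fin (n + 1) → ℤ) (i : ℕ) : G n s i ∣ EZ n s x i :=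
  dvd_sub (Dvd.dvd.mul_right (Int.gcd_dvd_left _ _) _) (Dvd.dvd.mul_right (Int.gcd_dvd_right _ _) _)

lemma G_pos (n : ℕ) (s : Fin n → ℤ) (hs : ∀ i, 0 < s i) (i : ℕ) : 0 < G n s i := by
  have := Int.gcd_pos_of_ne_zero_left (S n s (i+1)) (S_pos n s hs i).ne'
  unfold G; exact_mod_cast this

lemma exists_prim (n : ℕ) (s : Fin n → ℤ) (i : ℕ) (hi : i ≤ n) :
    ∃ x : Fin (n + 1) → ℤ, EZ n s x i = G n s i := by
  cases i with
  | zero =>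
    refine ⟨fun _ => 1, ?_⟩
    simp [EZ, G, X, S]
  | succ i =>
    have := Int.gcd_eq_gcd_ab (S n s (i+1)) (S n s (i+1+1))
    refine ⟨fun j => if (j : ℕ) = i then - Int.gcdB (S n s (i+1)) (S n s (i+1+1))
      else Int.gcdA (S n s (i+1)) (S n s (i+1+1)), ?_⟩
    have h1 : i < n + 1 := by omega
    have h2 : i < n := by omega
    unfold G
    rw [this]
    simp [EZ, X, h1, h2]

lemma gor_iff (n : ℕ) (s : Fin n → ℤ) (hs : ∀ i, 0 < s i) :
    IsGorenstein n s ↔ ∃ c, ∀ i ≤ n, EZ n s c i = G n s i := by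
  constructor
  · rintro ⟨c, hc⟩
    refine ⟨c, fun i hi => ?_⟩
    have hcI : c ∈ lhpConeInteriorZ n s := by
      rw [← hc]
      refine ⟨0, ?_, by simp⟩
      rw [memZ n s hs]
      intro j _
      have := EZ_smul n s 0 0 j
      simp at this
      exact this.ge
    have h1 := (memIZ n s hs c).1 hcI i hi
    have h2 := Int.le_of_dvd h1 (G_dvd n s c i)
    refine le_antisymm ?_ h2
    obtain ⟨y, hy⟩ := exists_prim n s i hi
    let w := mk n s (fun k => if k ≤ i then (k : ℤ) else k - 1)
    have hw0 : EZ n s w i = 0 := by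
      rw [EZ_mk _ _ _ (by simp) _ hi]; simp
    have hw1 : ∀ k ≤ n, k ≠ i → 1 ≤ EZ n s w k := by
      intro k hk hki
      rw [EZ_mk _ _ _ (by simp) _ hk]
      have h3 := mul_pos (S_pos n s hs k) (S_pos n s hs (k+1))
      have h4 : (if k + 1 ≤ i then ((k + 1 : ℕ) : ℤ) else ((k + 1 : ℕ) : ℤ) - 1)
          - (if k ≤ i then (k : ℤ) else k - 1) = 1 := by
        split_ifs <;> push_cast <;> omega
      rw [h4]; linarith
    let M : ℤ := 1 + ∑ k ∈ Finset.range (n + 1), |EZ n s y k|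
    have hM : ∀ k ≤ n, |EZ n s y k| < M := by
      intro k hk
      have := Finset.single_le_sum (f := fun k => |EZ n s y k|) (fun _ _ => abs_nonneg _)
        (Finset.mem_range.2 (by omega : k < n + 1))
      simp only [M]; linarith
    have hz : y + M • w ∈ lhpConeInteriorZ n s := by
      rw [memIZ n s hs]
      intro k hk
      rw [EZ_add, EZ_smul]
      by_cases hki : k = i
      · subst hki
        rw [hw0, hy, mul_zero, add_zero]
        exact G_pos n s hs k
      · have h5 := hw1 k hk hki
        have h6 := hM k hk
        have h7 := abs_nonneg (EZ n s y k)
        have h8 := neg_abs_le (EZ n s y k)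
        nlinarith
    rw [← hc] at hz
    obtain ⟨x, hx, hxe⟩ := hz
    have h9 := (memZ n s hs x).1 hx i hi
    have h10 : EZ n s (c + x) i = EZ n s (y + M • w) i := congrArg (fun t => EZ n s t i) hxe
    rw [EZ_add, EZ_add, EZ_smul, hw0, hy] at h10
    linarith
  · rintro ⟨c, hc⟩
    refine ⟨c, ?_⟩
    ext x
    rw [memIZ n s hs]
    constructor
    · rintro ⟨y, hy, rfl⟩ i hi
      have h1 := (memZ n s hs y).1 hy i hi
      have h2 := G_pos n s hs i
      simp only [EZ_add, hc i hi]
      linarith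
    · intro h
      refine ⟨x - c, ?_, by simp⟩
      rw [memZ n s hs]
      intro i hi
      have h1 : EZ n s (x - c + c) i = _ := EZ_add n s (x - c) c i
      rw [sub_add_cancel, hc i hi] at h1
      have h2 := Int.le_of_dvd (h i hi) (G_dvd n s x i)
      linarith

/-- Gorenstein in terms of explicit recurrences. -/
lemma gor_iff' (n : ℕ) (hn : 0 < n) (s : Fin n → ℤ) (hs : ∀ i, 0 < s i) :
    IsGorenstein n s ↔ ∃ (c : Fin n → ℤ) (t : ℤ),
      (∀ i : Fin n, (i : ℕ) = 0 → c i = 1) ∧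
      (∀ k j : Fin n, (j : ℕ) = (k : ℕ) + 1 →
          c j * s k = c k * s j + (Int.gcd (s k) (s j) : ℤ)) ∧
      (∀ i : Fin n, (i : ℕ) + 1 = n → t * s i = c i + 1) := by
  rw [gor_iff n s hs]
  constructor
  · rintro ⟨c, hc⟩
    refine ⟨fun i => c i.castSucc, c (Fin.last n), ?_, ?_, ?_⟩
    · rintro ⟨i, hi⟩ h
      simp only at h
      subst h
      have := hc 0 (by omega)
      simpa [EZ, G, X, S] using this
    · rintro ⟨k, hk⟩ ⟨j, hj⟩ h
      simp only at h
      subst h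
      have := hc (k + 1) (by omega)
      have h1 : k < n + 1 := by omega
      simp only [EZ, G, X, S, hk, hj, h1, dif_pos, Nat.succ_lt_succ hk] at this
      simp only [Fin.castSucc_mk]
      linarith
    · rintro ⟨i, hi⟩ h
      simp only at h
      subst h
      have := hc (i + 1) (by omega)
      simp [EZ, G, X, S] at this
      simp only [Fin.castSucc_mk, Fin.last]
      linarith
  · rintro ⟨c, t, h0, h1, h2⟩
    refine ⟨Fin.snoc c t, fun i hi => ?_⟩
    cases i with
    | zero =>
      have := h0 ⟨0, hn⟩ rfl
      simp [EZ, G, X, S, Fin.snoc, hn]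
      exact this
    | succ k =>
      have hk : k < n := by omega
      have hk1 : k < n + 1 := by omega
      by_cases hj : k + 1 < n
      · have := h1 ⟨k, hk⟩ ⟨k + 1, hj⟩ rfl
        simp [EZ, G, X, S, Fin.snoc, hk, hj, hk1]
        linarith
      · have hkn : k + 1 = n := by omega
        subst hkn
        have := h2 ⟨k, hk⟩ rfl
        simp [EZ, G, X, S, Fin.snoc]
        linarith

end LHP

theorem lhp_gorenstein_iff_of_coprime_pair (n : ℕ) (s : Fin n → ℤ)
    (hs : ∀ i, 0 < s i)
    (hcop : ∃ k j : Fin n, (j : ℕ) = (k : ℕ) + 1 ∧ Int.gcd (s k) (s j) = 1) :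
    IsGorenstein n s ↔
      ∃ c d : Fin n → ℤ,
        (∀ i : Fin n, (i : ℕ) = 0 → c i = 1) ∧
        (∀ i : Fin n, (i : ℕ) = 0 → d i = 1) ∧
        (∀ k j : Fin n, (j : ℕ) = (k : ℕ) + 1 →
          c j * s k = c k * s j + (Int.gcd (s k) (s j) : ℤ)) ∧
        (∀ k j : Fin n, (j : ℕ) = (k : ℕ) + 1 →
          d j * s k.rev = d k * s j.rev + (Int.gcd (s k.rev) (s j.rev) : ℤ)) := by
  obtain ⟨k, j, hkj, hg⟩ := hcop
  have hn : 0 < n := by have := k.2; omega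
  rw [LHP.gor_iff' n hn s hs]
  constructor
  · rintro ⟨c, t, h0, h1, h2⟩
    refine ⟨c, fun i => t * s i.rev - c i.rev, h0, ?_, h1, ?_⟩
    · intro i hi
      have := h2 i.rev (by rw [Fin.val_rev]; omega)
      linarith
    · intro a b hab
      have := h1 b.rev a.rev (by rw [Fin.val_rev, Fin.val_rev]; omega)
      rw [Int.gcd_comm]
      linarith
  · rintro ⟨c, d, h0, h0', h1, h2⟩
    let u : Fin n → ℤ := fun i => c i + d i.rev
    have hu : ∀ a b : Fin n, (b : ℕ) = a + 1 → u b * s a = u a * s b := by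
      intro a b hab
      have e1 := h1 a b hab
      have e2 := h2 b.rev a.rev (by rw [Fin.val_rev, Fin.val_rev]; omega)
      rw [Fin.rev_rev, Fin.rev_rev, Int.gcd_comm] at e2
      simp only [u]
      linarith
    have hdv : s k ∣ u k := by
      have : s k ∣ u k * s j := ⟨u j, by rw [← hu k j hkj]; ring⟩
      exact (Int.isCoprime_iff_gcd_eq_one.2 hg).dvd_of_dvd_mul_right this
    obtain ⟨t, ht⟩ := hdv
    have hz : ∀ m, ∀ h : m < n, u ⟨m, h⟩ * s ⟨0, hn⟩ = u ⟨0, hn⟩ * s ⟨m, h⟩ := by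
      intro m
      induction m with
      | zero => intro h; rfl
      | succ m ih =>
        intro h
        have e1 := ih (by omega)
        have e2 := hu ⟨m, by omega⟩ ⟨m + 1, h⟩ rfl
        have e3 := hs ⟨m, by omega⟩
        apply mul_right_cancel₀ e3.ne'
        calc _ = (u ⟨m + 1, h⟩ * s ⟨m, by omega⟩) * s ⟨0, hn⟩ := by ring
          _ = (u ⟨m, by omega⟩ * s ⟨0, hn⟩) * s ⟨m + 1, h⟩ := by rw [e2]; ring
          _ = _ := by rw [e1]; ring
    have hu0 : u ⟨0, hn⟩ = t * s ⟨0, hn⟩ := by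
      have e1 := hz k k.2
      have e3 := hs k
      apply mul_right_cancel₀ e3.ne'
      have e4 : u ⟨k, k.2⟩ = s k * t := ht
      rw [e4] at e1
      have e5 : s ⟨k, k.2⟩ = s k := rfl
      rw [e5] at e1
      linarith
    refine ⟨c, t, h0, h1, fun i hi => ?_⟩
    have e1 := hz i i.2
    have e6 : u ⟨i, i.2⟩ = c i + 1 := by
      have := h0' i.rev (by rw [Fin.val_rev]; omega)
      simp only [u, this]
    rw [hu0, e6] at e1
    apply mul_right_cancel₀ (hs ⟨0, hn⟩).ne'
    have e5 : s ⟨i, i.2⟩ = s i := rfl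
    rw [e5] at e1
    linarith
end

section
/- Let s = (s_1,…,s_n) be a sequence of positive integers satisfying gcd(s_{i−1}, s_i) = 1 for some 1 < i ≤ n. The s-Eulerian polynomial Σ_{e ∈ I_n^(s)} z^{asc(e)} is palindromic if and only if there exist c, d ∈ ℤ^n with c_1 = d_1 = 1 satisfying c_j·s_{j−1} = c_{j−1}·s_j + gcd(s_{j−1}, s_j) and d_j·(←s)_{j−1} = d_{j−1}·(←s)_j + gcd((←s)_{j−1}, (←s)_j) for all 2 ≤ j ≤ n. -/
open scoped BigOperators

namespace SEul

/-- Extend a finite sequence (0-based) to the naturals with shift by one and default value `a`. -/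
def ext (n : ℕ) (a : ℤ) (f : Fin n → ℤ) : ℕ → ℤ :=
  fun j => if h : 1 ≤ j ∧ j ≤ n then f ⟨j - 1, by omega⟩ else a

theorem ext_succ (n : ℕ) (a : ℤ) (f : Fin n → ℤ) (i : Fin n) : ext n a f (i + 1) = f i := by
  have := i.2
  unfold ext
  rw [dif_pos (by omega)]
  rfl

theorem ext_zero (n : ℕ) (a : ℤ) (f : Fin n → ℤ) : ext n a f 0 = a := by
  simp [ext]

theorem ext_last (n : ℕ) (a : ℤ) (f : Fin n → ℤ) : ext n a f (n + 1) = a := by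
  simp [ext]

theorem ext_pos (n : ℕ) (s : Fin n → ℤ) (hs : ∀ i, 0 < s i) (j : ℕ) : 0 < ext n 1 s j := by
  unfold ext
  split_ifs
  · exact hs _
  · norm_num

/-- The fractional coordinate. -/
def X (S F : ℕ → ℤ) (j : ℕ) : ℚ := Int.fract ((F j : ℚ) / S j - (F (j + 1) : ℚ) / S (j + 1))

/-- The height. -/
def H (n : ℕ) (S F : ℕ → ℤ) : ℚ := ∑ j ∈ Finset.range (n + 1), X S F j

/-- The lcm of two consecutive entries. -/
def m (S : ℕ → ℤ) (j : ℕ) : ℤ := S j * S (j + 1) / (Int.gcd (S j) (S (j + 1)) : ℤ)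

theorem m_spec (S : ℕ → ℤ) (j : ℕ) :
    S j * S (j + 1) = m S j * (Int.gcd (S j) (S (j + 1)) : ℤ) := by
  unfold m
  rw [Int.ediv_mul_cancel]
  exact Dvd.dvd.mul_right (Int.gcd_dvd_left ..) _

theorem g_pos (S : ℕ → ℤ) (hS : ∀ j, 0 < S j) (j : ℕ) :
    (0 : ℤ) < (Int.gcd (S j) (S (j + 1)) : ℤ) := by
  have := Int.gcd_pos_of_ne_zero_left (S (j + 1)) (hS j).ne'
  exact_mod_cast this

theorem m_pos (S : ℕ → ℤ) (hS : ∀ j, 0 < S j) (j : ℕ) : 0 < m S j := by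
  have h := m_spec S j
  have h1 := mul_pos (hS j) (hS (j + 1))
  rw [h] at h1
  exact pos_of_mul_pos_left h1 (g_pos S hS j).le

theorem fract_div (z m : ℤ) (hm : 0 < m) :
    Int.fract ((z : ℚ) / m) = ((z % m : ℤ) : ℚ) / m := by
  have hm' : (m : ℚ) ≠ 0 := by exact_mod_cast hm.ne'
  have h1 : (z : ℚ) / m = ((z % m : ℤ) : ℚ) / m + ((z / m : ℤ) : ℚ) := by
    have := Int.emod_add_mul_ediv z m
    have h2 : ((z % m : ℤ) : ℚ) + m * ((z / m : ℤ) : ℚ) = z := by exact_mod_cast this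
    rw [← h2]; field_simp
  rw [h1, Int.fract_add_intCast, Int.fract_eq_self]
  have a := Int.emod_nonneg z hm.ne'
  have b := Int.emod_lt_of_pos z hm
  constructor
  · apply div_nonneg <;> positivity
  · rw [div_lt_one (by exact_mod_cast hm)]
    exact_mod_cast b

theorem diff_eq (S F : ℕ → ℤ) (hS : ∀ j, 0 < S j) (j : ℕ) :
    ∃ z : ℤ, (F j : ℚ) / S j - (F (j + 1) : ℚ) / S (j + 1) = (z : ℚ) / m S j ∧
      F j * S (j + 1) - F (j + 1) * S j = z * (Int.gcd (S j) (S (j + 1)) : ℤ) := by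
  have hd : (Int.gcd (S j) (S (j + 1)) : ℤ) ∣ F j * S (j + 1) - F (j + 1) * S j :=
    dvd_sub (Dvd.dvd.mul_left (Int.gcd_dvd_right ..) _) (Dvd.dvd.mul_left (Int.gcd_dvd_left ..) _)
  obtain ⟨z, hz⟩ := hd
  refine ⟨z, ?_, by rw [hz, mul_comm]⟩
  have h1 : (S j : ℚ) ≠ 0 := by exact_mod_cast (hS j).ne'
  have h2 : (S (j + 1) : ℚ) ≠ 0 := by exact_mod_cast (hS (j + 1)).ne'
  have h3 : (m S j : ℚ) ≠ 0 := by exact_mod_cast (m_pos S hS j).ne'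
  have h4 : ((Int.gcd (S j) (S (j + 1)) : ℤ) : ℚ) ≠ 0 := by exact_mod_cast (g_pos S hS j).ne'
  have h5 := m_spec S j
  generalize (Int.gcd (S j) (S (j + 1)) : ℤ) = g at *
  have h5' : (S j : ℚ) * S (j + 1) = m S j * g := by exact_mod_cast h5
  have hz' : (F j : ℚ) * S (j + 1) - F (j + 1) * S j = g * z := by exact_mod_cast hz
  rw [div_sub_div _ _ h1 h2, h5', div_eq_div_iff (by positivity) h3]
  rw [mul_comm (S j : ℚ) (F (j + 1)), hz']
  ring

theorem X_le (S F : ℕ → ℤ) (hS : ∀ j, 0 < S j) (j : ℕ) : X S F j ≤ 1 - 1 / (m S j : ℚ) := by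
  obtain ⟨z, hz, -⟩ := diff_eq S F hS j
  have hm := m_pos S hS j
  unfold X
  rw [hz, fract_div _ _ hm]
  have h3 : (0 : ℚ) < m S j := by exact_mod_cast hm
  rw [div_le_iff₀ h3, sub_mul, one_div_mul_cancel h3.ne', one_mul]
  have b := Int.emod_lt_of_pos z hm
  have : z % m S j ≤ m S j - 1 := by omega
  exact_mod_cast this

theorem X_congr (S F G : ℕ → ℤ) (j : ℕ) (u v : ℤ)
    (hS : ∀ j, 0 < S j)
    (h1 : F j = G j + u * S j) (h2 : F (j + 1) = G (j + 1) + v * S (j + 1)) :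
    X S F j = X S G j := by
  unfold X
  have h1' : (S j : ℚ) ≠ 0 := by exact_mod_cast (hS j).ne'
  have h2' : (S (j + 1) : ℚ) ≠ 0 := by exact_mod_cast (hS (j + 1)).ne'
  rw [h1, h2, Int.fract_eq_fract]
  refine ⟨u - v, ?_⟩
  push_cast
  field_simp
  ring

/-- Reduction of an integer sequence to an inversion sequence. -/
def red (n : ℕ) (s : Fin n → ℤ) (F : ℕ → ℤ) : Fin n → ℤ := fun i => F (i + 1) % s i

theorem red_inv (n : ℕ) (s : Fin n → ℤ) (hs : ∀ i, 0 < s i) (F : ℕ → ℤ) :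
    IsInvSeq n s (red n s F) := fun i =>
  ⟨Int.emod_nonneg _ (hs i).ne', Int.emod_lt_of_pos _ (hs i)⟩

theorem red_ext (n : ℕ) (s : Fin n → ℤ) (e : Fin n → ℤ) (he : IsInvSeq n s e) :
    red n s (ext n 0 e) = e := by
  funext i
  unfold red
  rw [ext_succ]
  exact Int.emod_eq_of_lt (he i).1 (he i).2

theorem red_cong (n : ℕ) (s : Fin n → ℤ) (F : ℕ → ℤ) (j : ℕ) :
    ∃ u : ℤ, F j = ext n 0 (red n s F) j + u * ext n 1 s j := by
  unfold ext
  by_cases h : 1 ≤ j ∧ j ≤ n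
  · rw [dif_pos h, dif_pos h]
    refine ⟨F j / s ⟨j - 1, by omega⟩, ?_⟩
    unfold red
    have : ((⟨j - 1, by omega⟩ : Fin n) : ℕ) + 1 = j := by simp; omega
    rw [this, mul_comm]
    exact (Int.emod_add_mul_ediv _ _).symm
  · rw [dif_neg h, dif_neg h]
    exact ⟨F j, by ring⟩

theorem X_red (n : ℕ) (s : Fin n → ℤ) (hs : ∀ i, 0 < s i) (F : ℕ → ℤ) (j : ℕ) :
    X (ext n 1 s) (ext n 0 (red n s F)) j = X (ext n 1 s) F j := by
  obtain ⟨u, hu⟩ := red_cong n s F j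
  obtain ⟨v, hv⟩ := red_cong n s F (j + 1)
  exact (X_congr _ _ _ j u v (ext_pos n s hs) hu hv).symm

theorem fract_sub_unit (a b : ℚ) (ha : 0 ≤ a) (ha' : a < 1) (hb : 0 ≤ b) (hb' : b < 1) :
    Int.fract (a - b) = a - b + if a < b then 1 else 0 := by
  split_ifs with h
  · rw [← Int.fract_add_one, Int.fract_eq_self]
    constructor <;> linarith
  · rw [add_zero, Int.fract_eq_self]
    constructor <;> linarith

theorem ratio_bounds (n : ℕ) (s : Fin n → ℤ) (hs : ∀ i, 0 < s i) (e : Fin n → ℤ)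
    (he : IsInvSeq n s e) (j : ℕ) :
    (0 : ℚ) ≤ (ext n 0 e j : ℚ) / ext n 1 s j ∧ (ext n 0 e j : ℚ) / ext n 1 s j < 1 := by
  unfold ext
  split_ifs with h
  · have h1 := he ⟨j - 1, by omega⟩
    have h2 := hs ⟨j - 1, by omega⟩
    constructor
    · apply div_nonneg
      · exact_mod_cast h1.1
      · exact_mod_cast h2.le
    · rw [div_lt_one (by exact_mod_cast h2)]
      exact_mod_cast h1.2
  · simp

theorem asc_eq (n : ℕ) (s : Fin n → ℤ) (hs : ∀ i, 0 < s i) (e : Fin n → ℤ)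
    (he : IsInvSeq n s e) : (asc n s e : ℚ) = H n (ext n 1 s) (ext n 0 e) := by
  set ρ : ℕ → ℚ := fun j => (ext n 0 e j : ℚ) / ext n 1 s j with hρ
  have hb := ratio_bounds n s hs e he
  have hX : ∀ j, X (ext n 1 s) (ext n 0 e) j =
      (ρ j - ρ (j + 1)) + if ρ j < ρ (j + 1) then 1 else 0 := fun j =>
    fract_sub_unit _ _ (hb j).1 (hb j).2 (hb (j + 1)).1 (hb (j + 1)).2
  unfold H
  rw [Finset.sum_congr rfl (fun j _ => hX j), Finset.sum_add_distrib, Finset.sum_range_sub']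
  have h0 : ρ 0 = 0 := by simp [hρ, ext_zero]
  have hl : ρ (n + 1) = 0 := by simp [hρ, ext_last]
  rw [Finset.sum_range_succ, h0, hl, if_neg (not_lt.mpr (hb n).1), Finset.sum_range]
  unfold asc ascSet
  rw [Finset.card_filter]
  push_cast
  rw [sub_zero, zero_add, add_zero]
  apply Finset.sum_congr rfl
  intro i _
  have h1 : invRatio n s e i = ρ (i + 1) := by
    simp only [invRatio, hρ, ext_succ]
  have h2 : prevRatio n s e i = ρ i := by
    unfold prevRatio
    split_ifs with h
    · rw [h, h0]
    · have := ext_succ n 0 e ⟨(i : ℕ) - 1, lt_of_le_of_lt (Nat.sub_le _ _) i.isLt⟩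
      have h3 := ext_succ n 1 s ⟨(i : ℕ) - 1, lt_of_le_of_lt (Nat.sub_le _ _) i.isLt⟩
      have h4 : (i : ℕ) - 1 + 1 = i := by omega
      simp only [h4] at this h3
      simp only [invRatio, hρ, this, h3]
  rw [h1, h2]

theorem asc_red (n : ℕ) (s : Fin n → ℤ) (hs : ∀ i, 0 < s i) (F : ℕ → ℤ) :
    (asc n s (red n s F) : ℚ) = H n (ext n 1 s) F := by
  rw [asc_eq n s hs _ (red_inv n s hs F)]
  exact Finset.sum_congr rfl fun j _ => X_red n s hs F j

/-- The finite set of inversion sequences. -/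
noncomputable def box (n : ℕ) (s : Fin n → ℤ) : Finset (Fin n → ℤ) :=
  Fintype.piFinset fun i => Finset.Ico 0 (s i)

theorem mem_box (n : ℕ) (s e : Fin n → ℤ) : e ∈ box n s ↔ IsInvSeq n s e := by
  simp [box, IsInvSeq]

theorem hStar_eq (n : ℕ) (s : Fin n → ℤ) (k : ℕ) :
    hStar n s k = ((box n s).filter fun e => asc n s e = k).card := by
  unfold hStar
  exact Nat.subtype_card _ fun e => by rw [Finset.mem_filter, mem_box]

/-- The reflection of an inversion sequence in an integer sequence. -/
def refl (n : ℕ) (s : Fin n → ℤ) (C : ℕ → ℤ) (e : Fin n → ℤ) : Fin n → ℤ :=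
  red n s fun j => C j - ext n 0 e j

theorem refl_mem (n : ℕ) (s : Fin n → ℤ) (hs : ∀ i, 0 < s i) (C : ℕ → ℤ) (e : Fin n → ℤ) :
    refl n s C e ∈ box n s := by
  rw [mem_box]
  exact red_inv n s hs _

theorem refl_refl (n : ℕ) (s : Fin n → ℤ) (C : ℕ → ℤ) (e : Fin n → ℤ)
    (he : e ∈ box n s) : refl n s C (refl n s C e) = e := by
  rw [mem_box] at he
  funext i
  unfold refl red
  beta_reduce
  rw [ext_succ, ext_succ, Int.sub_emod, Int.emod_emod_of_dvd _ dvd_rfl, ← Int.sub_emod,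
    sub_sub_cancel]
  exact Int.emod_eq_of_lt (he i).1 (he i).2

theorem asc_zero (n : ℕ) (s : Fin n → ℤ) : asc n s 0 = 0 := by
  simp [asc, ascSet, prevRatio, invRatio]

theorem X_refl (S C F : ℕ → ℤ) (hS : ∀ j, 0 < S j) (j : ℕ)
    (hC : C (j + 1) * S j - C j * S (j + 1) = (Int.gcd (S j) (S (j + 1)) : ℤ)) :
    X S (fun j => C j - F j) j = 1 - 1 / (m S j : ℚ) - X S F j := by
  obtain ⟨z, hz, hz'⟩ := diff_eq S C hS j
  have hz1 : z = -1 := by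
    have : z * (Int.gcd (S j) (S (j + 1)) : ℤ) = (-1) * (Int.gcd (S j) (S (j + 1)) : ℤ) := by
      rw [← hz', ← hC]; ring
    exact mul_right_cancel₀ (g_pos S hS j).ne' this
  subst hz1
  have hle := X_le S F hS j
  have hm : (0 : ℚ) < m S j := by exact_mod_cast m_pos S hS j
  have hm1 : 0 < 1 / (m S j : ℚ) := by positivity
  have hx0 : 0 ≤ X S F j := Int.fract_nonneg _
  have key : X S (fun j => C j - F j) j = Int.fract (1 - 1 / (m S j : ℚ) - X S F j) := by
    unfold X
    rw [Int.fract_eq_fract]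
    refine ⟨⌊(F j : ℚ) / S j - (F (j + 1) : ℚ) / S (j + 1)⌋ * (-1) - 1, ?_⟩
    unfold Int.fract
    push_cast at hz ⊢
    have e1 : ((C j : ℚ) - F j) / S j - ((C (j + 1) : ℚ) - F (j + 1)) / S (j + 1)
      = ((C j : ℚ) / S j - (C (j + 1) : ℚ) / S (j + 1))
        - ((F j : ℚ) / S j - (F (j + 1) : ℚ) / S (j + 1)) := by ring
    rw [e1, hz]
    ring
  rw [key, Int.fract_eq_self]
  constructor <;> linarith

theorem pal_of (n : ℕ) (s : Fin n → ℤ) (hs : ∀ i, 0 < s i) (C : ℕ → ℤ)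
    (hC : ∀ j, j ≤ n → C (j + 1) * ext n 1 s j - C j * ext n 1 s (j + 1) =
      (Int.gcd (ext n 1 s j) (ext n 1 s (j + 1)) : ℤ)) :
    IsPalindromic (hStar n s) := by
  have hsum : ∀ e ∈ box n s, (asc n s (refl n s C e) : ℚ) + asc n s e =
      ∑ j ∈ Finset.range (n + 1), (1 - 1 / (m (ext n 1 s) j : ℚ)) := by
    intro e he
    unfold refl
    rw [asc_red n s hs, asc_eq n s hs e ((mem_box n s e).1 he), H, H, ← Finset.sum_add_distrib]
    apply Finset.sum_congr rfl
    intro j hj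
    rw [X_refl _ C _ (ext_pos n s hs) j (hC j (by simpa [Nat.lt_succ_iff] using hj))]
    ring
  have h0 : (0 : Fin n → ℤ) ∈ box n s := by
    rw [mem_box]; exact fun i => ⟨le_rfl, hs i⟩
  have hr : ∀ e ∈ box n s, asc n s (refl n s C e) + asc n s e = asc n s (refl n s C 0) := by
    intro e he
    have h1 := hsum e he
    rw [← hsum 0 h0, asc_zero] at h1
    exact_mod_cast h1
  refine ⟨asc n s (refl n s C 0), ?_, ?_, ?_⟩
  · rw [hStar_eq]
    apply Finset.card_ne_zero_of_mem (a := refl n s C 0)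
    rw [Finset.mem_filter]
    exact ⟨refl_mem n s hs C 0, rfl⟩
  · intro k hk
    rw [hStar_eq, Finset.card_eq_zero, Finset.filter_eq_empty_iff]
    intro e he h
    have := hr e he
    omega
  · intro j hj
    rw [hStar_eq, hStar_eq]
    apply Finset.card_nbij' (refl n s C) (refl n s C)
    · intro e he
      rw [Finset.mem_coe, Finset.mem_filter] at he ⊢
      have := hr e he.1
      exact ⟨refl_mem n s hs C e, by omega⟩
    · intro e he
      rw [Finset.mem_coe, Finset.mem_filter] at he ⊢
      have := hr e he.1
      exact ⟨refl_mem n s hs C e, by omega⟩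
    · intro e he
      rw [Finset.mem_coe, Finset.mem_filter] at he
      exact refl_refl n s C e he.1
    · intro e he
      rw [Finset.mem_coe, Finset.mem_filter] at he
      exact refl_refl n s C e he.1

theorem X_sub_ge (S C F : ℕ → ℤ) (j : ℕ) :
    X S C j ≤ X S (fun j => C j - F j) j + X S F j := by
  have e1 : (C j : ℚ) / S j - (C (j + 1) : ℚ) / S (j + 1)
      = (((C j - F j : ℤ) : ℚ) / S j - ((C (j + 1) - F (j + 1) : ℤ) : ℚ) / S (j + 1))
        + ((F j : ℚ) / S j - (F (j + 1) : ℚ) / S (j + 1)) := by push_cast; ring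
  unfold X
  rw [e1]
  exact Int.fract_add_le _ _

theorem sum_asc (n : ℕ) (s : Fin n → ℤ) (r : ℕ)
    (h1 : ∀ k, r < k → hStar n s k = 0) (h2 : ∀ j, j ≤ r → hStar n s j = hStar n s (r - j)) :
    2 * ∑ e ∈ box n s, (asc n s e : ℤ) = (box n s).card * r := by
  have hmaps : ∀ e ∈ box n s, asc n s e ∈ Finset.range (r + 1) := by
    intro e he
    rw [Finset.mem_range]
    by_contra hc
    have := h1 (asc n s e) (by omega)
    rw [hStar_eq, Finset.card_eq_zero, Finset.filter_eq_empty_iff] at this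
    exact this he rfl
  have key : ∀ f : ℕ → ℤ, ∑ e ∈ box n s, f (asc n s e) =
      ∑ k ∈ Finset.range (r + 1), (hStar n s k : ℤ) * f k := by
    intro f
    rw [← Finset.sum_fiberwise_of_maps_to hmaps]
    apply Finset.sum_congr rfl
    intro k _
    rw [hStar_eq, Finset.sum_congr rfl (g := fun _ => f k)]
    · simp
    · intro e he
      rw [(Finset.mem_filter.1 he).2]
  have ka := key fun k => (k : ℤ)
  have kb := key fun k => (r : ℤ) - k
  have kc : ∑ k ∈ Finset.range (r + 1), (hStar n s k : ℤ) * ((r : ℤ) - k) =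
      ∑ k ∈ Finset.range (r + 1), (hStar n s k : ℤ) * (k : ℤ) := by
    rw [← Finset.sum_range_reflect]
    apply Finset.sum_congr rfl
    intro k hk
    rw [Finset.mem_range] at hk
    have e1 : r + 1 - 1 - k = r - k := by omega
    rw [e1, h2 k (by omega), Nat.cast_sub (by omega)]
    ring
  simp only [Finset.sum_sub_distrib] at kb
  rw [kc, ← ka, Finset.sum_const, nsmul_eq_mul] at kb
  linarith

theorem exists_X (n : ℕ) (s : Fin n → ℤ) (hs : ∀ i, 0 < s i) (j : ℕ) :
    ∃ e ∈ box n s, X (ext n 1 s) (ext n 0 e) j = 1 - 1 / (m (ext n 1 s) j : ℚ) := by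
  set S := ext n 1 s with hS
  have hSp : ∀ j, 0 < S j := ext_pos n s hs
  set F : ℕ → ℤ := fun k => if k = j then - Int.gcdB (S j) (S (j + 1)) else
    Int.gcdA (S j) (S (j + 1)) with hF
  refine ⟨red n s F, ?_, ?_⟩
  · rw [mem_box]; exact red_inv n s hs F
  · rw [X_red n s hs]
    obtain ⟨z, hz, hz'⟩ := diff_eq S F hSp j
    have hb := Int.gcd_eq_gcd_ab (S j) (S (j + 1))
    have hz1 : z = -1 := by
      apply mul_right_cancel₀ (g_pos S hSp j).ne'
      rw [← hz', hb]
      simp [hF]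
      ring
    subst hz1
    have hm : 0 < m S j := m_pos S hSp j
    have hmq : (1 : ℚ) ≤ m S j := by exact_mod_cast hm
    have hm1 : 1 / (m S j : ℚ) ≤ 1 := by
      rw [div_le_one (by linarith)]; exact hmq
    have hm0 : 0 < 1 / (m S j : ℚ) := by positivity
    unfold X
    rw [hz, ← Int.fract_add_one, Int.fract_eq_self.2]
    · push_cast; ring
    · have : (((-1 : ℤ) : ℚ) / m S j) = - (1 / (m S j : ℚ)) := by push_cast; ring
      rw [this]
      constructor <;> linarith

theorem exists_of_pal (n : ℕ) (s : Fin n → ℤ) (hs : ∀ i, 0 < s i)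
    (hp : IsPalindromic (hStar n s)) :
    ∃ c ∈ box n s, ∀ j, j ≤ n →
      X (ext n 1 s) (ext n 0 c) j = 1 - 1 / (m (ext n 1 s) j : ℚ) := by
  obtain ⟨r, hr, h1, h2⟩ := hp
  have hs2 := sum_asc n s r h1 h2
  rw [hStar_eq] at hr
  obtain ⟨c, hc⟩ := Finset.card_ne_zero.1 hr
  rw [Finset.mem_filter] at hc
  obtain ⟨hc, hcr⟩ := hc
  refine ⟨c, hc, ?_⟩
  set C := ext n 0 c with hC
  set S := ext n 1 s with hS
  have hge : ∀ e ∈ box n s, asc n s c ≤ asc n s (refl n s C e) + asc n s e := by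
    intro e he
    have : (asc n s c : ℚ) ≤ asc n s (refl n s C e) + asc n s e := by
      unfold refl
      rw [asc_red n s hs, asc_eq n s hs e ((mem_box n s e).1 he),
        asc_eq n s hs c ((mem_box n s c).1 hc), H, H, H, ← Finset.sum_add_distrib]
      exact Finset.sum_le_sum fun j _ => X_sub_ge _ _ _ j
    exact_mod_cast this
  have hrefl : ∑ e ∈ box n s, (asc n s (refl n s C e) : ℤ) = ∑ e ∈ box n s, (asc n s e : ℤ) := by
    apply Finset.sum_nbij' (refl n s C) (refl n s C)
    · exact fun e _ => refl_mem n s hs C e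
    · exact fun e _ => refl_mem n s hs C e
    · exact fun e he => refl_refl n s C e he
    · exact fun e he => refl_refl n s C e he
    · exact fun e _ => rfl
  have hzero : ∑ e ∈ box n s,
      ((asc n s (refl n s C e) : ℤ) + asc n s e - asc n s c) = 0 := by
    rw [Finset.sum_sub_distrib, Finset.sum_add_distrib, hrefl, Finset.sum_const, nsmul_eq_mul, hcr]
    linarith
  have heq : ∀ e ∈ box n s, asc n s (refl n s C e) + asc n s e = asc n s c := by
    intro e he
    have := (Finset.sum_eq_zero_iff_of_nonneg (fun e he => by
      have := hge e he
      omega)).1 hzero e he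
    omega
  have hXeq : ∀ e ∈ box n s, ∀ j ∈ Finset.range (n + 1),
      X S C j = X S (fun j => C j - ext n 0 e j) j + X S (ext n 0 e) j := by
    intro e he
    rw [← Finset.sum_eq_sum_iff_of_le (fun j _ => X_sub_ge _ _ _ j), Finset.sum_add_distrib]
    have := heq e he
    have : (asc n s c : ℚ) = asc n s (refl n s C e) + asc n s e := by exact_mod_cast this.symm
    unfold refl at this
    rw [asc_red n s hs, asc_eq n s hs e ((mem_box n s e).1 he),
        asc_eq n s hs c ((mem_box n s c).1 hc)] at this
    exact this
  intro j hj
  obtain ⟨e, he, hx⟩ := exists_X n s hs j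
  apply le_antisymm (X_le _ _ (ext_pos n s hs) j)
  rw [hXeq e he j (by rw [Finset.mem_range]; omega), ← hx]
  have : 0 ≤ X S (fun j => C j - ext n 0 e j) j := Int.fract_nonneg _
  linarith

theorem exists_C (n : ℕ) (s : Fin n → ℤ) (hs : ∀ i, 0 < s i)
    (hp : IsPalindromic (hStar n s)) :
    ∃ C : ℕ → ℤ, C 0 = 0 ∧ ∀ j, j ≤ n → C (j + 1) * ext n 1 s j - C j * ext n 1 s (j + 1) =
      (Int.gcd (ext n 1 s j) (ext n 1 s (j + 1)) : ℤ) := by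
  obtain ⟨c, hc, hX⟩ := exists_of_pal n s hs hp
  set E := ext n 0 c with hE
  set S := ext n 1 s with hS
  have hSp : ∀ j, 0 < S j := ext_pos n s hs
  set t : ℕ → ℚ := fun j => (E j : ℚ) / S j - (E (j + 1) : ℚ) / S (j + 1) with ht
  refine ⟨fun j => E j + S j * ∑ i ∈ Finset.range j, (⌊t i⌋ + 1), ?_, ?_⟩
  · simp [hE, ext_zero]
  · intro j hj
    have h := hX j hj
    have h' : t j - ⌊t j⌋ = 1 - 1 / (m S j : ℚ) := h
    obtain ⟨z, hz, hz'⟩ := diff_eq S E hSp j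
    have hm := m_pos S hSp j
    have hmq : (m S j : ℚ) ≠ 0 := by exact_mod_cast hm.ne'
    change t j = _ at hz
    have hzz : z = (⌊t j⌋ + 1) * m S j - 1 := by
      have : (z : ℚ) = (⌊t j⌋ + 1) * m S j - 1 := by
        have h3 : (z : ℚ) = t j * m S j := by rw [hz]; field_simp
        have h4 : t j = ⌊t j⌋ + 1 - 1 / (m S j : ℚ) := by linarith
        rw [h3]
        nth_rw 1 [h4]
        field_simp
      exact_mod_cast this
    have hms := m_spec S j
    beta_reduce
    rw [Finset.sum_range_succ]
    rw [hzz] at hz'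
    generalize ∑ i ∈ Finset.range j, (⌊t i⌋ + 1) = A at *
    generalize ⌊t j⌋ + 1 = B at *
    generalize (Int.gcd (S j) (S (j + 1)) : ℤ) = g at *
    linear_combination -hz' + B * hms

theorem fwd (n : ℕ) (s : Fin n → ℤ) (C : ℕ → ℤ) (hC0 : C 0 = 0)
    (hC : ∀ j, j ≤ n → C (j + 1) * ext n 1 s j - C j * ext n 1 s (j + 1) =
      (Int.gcd (ext n 1 s j) (ext n 1 s (j + 1)) : ℤ)) :
    ∃ c d : Fin n → ℤ,
        (∀ i : Fin n, (i : ℕ) = 0 → c i = 1) ∧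
        (∀ i : Fin n, (i : ℕ) = 0 → d i = 1) ∧
        (∀ k j : Fin n, (j : ℕ) = (k : ℕ) + 1 →
          c j * s k = c k * s j + (Int.gcd (s k) (s j) : ℤ)) ∧
        (∀ k j : Fin n, (j : ℕ) = (k : ℕ) + 1 →
          d j * s k.rev = d k * s j.rev + (Int.gcd (s k.rev) (s j.rev) : ℤ)) := by
  have hc : ∀ k j : Fin n, (j : ℕ) = (k : ℕ) + 1 →
      C (j + 1) * s k = C (k + 1) * s j + (Int.gcd (s k) (s j) : ℤ) := by
    intro k j h
    have h1 := hC j (by omega)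
    rw [ext_succ] at h1
    have h2 := ext_succ n 1 s k
    rw [← h] at h2
    rw [h2, h] at h1
    rw [h]
    linarith
  refine ⟨fun i => C (i + 1), fun i => C (n + 1) * s i.rev - C (i.rev + 1), ?_, ?_, hc, ?_⟩
  · intro i hi
    have h1 := hC i (by omega)
    have h0 : ext n 1 s (i : ℕ) = 1 := by rw [hi]; exact ext_zero ..
    have h2 : C (i : ℕ) = 0 := by rw [hi]; exact hC0
    rw [h0, h2] at h1
    simpa using h1
  · intro i hi
    have hi' := i.2
    have e1 : (i.rev : ℕ) + 1 = n := by rw [Fin.val_rev]; omega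
    have h1 := hC n le_rfl
    have h2 := ext_succ n 1 s i.rev
    rw [e1] at h2
    rw [h2, ext_last] at h1
    beta_reduce
    rw [e1]
    simpa using h1
  · intro k j h
    have := hc j.rev k.rev (by simp only [Fin.val_rev]; omega)
    beta_reduce
    rw [Int.gcd_comm]
    linarith

theorem bwd (n : ℕ) (s : Fin n → ℤ) (hs : ∀ i, 0 < s i)
    (hcop : ∃ k j : Fin n, (j : ℕ) = (k : ℕ) + 1 ∧ Int.gcd (s k) (s j) = 1)
    (c d : Fin n → ℤ)
    (hc0 : ∀ i : Fin n, (i : ℕ) = 0 → c i = 1)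
    (hd0 : ∀ i : Fin n, (i : ℕ) = 0 → d i = 1)
    (hc : ∀ k j : Fin n, (j : ℕ) = (k : ℕ) + 1 →
          c j * s k = c k * s j + (Int.gcd (s k) (s j) : ℤ))
    (hd : ∀ k j : Fin n, (j : ℕ) = (k : ℕ) + 1 →
          d j * s k.rev = d k * s j.rev + (Int.gcd (s k.rev) (s j.rev) : ℤ)) :
    ∃ C : ℕ → ℤ, ∀ j, j ≤ n → C (j + 1) * ext n 1 s j - C j * ext n 1 s (j + 1) =
      (Int.gcd (ext n 1 s j) (ext n 1 s (j + 1)) : ℤ) := by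
  have hf : ∀ k j : Fin n, (j : ℕ) = (k : ℕ) + 1 →
      (c j + d j.rev) * s k = (c k + d k.rev) * s j := by
    intro k j h
    have h1 := hc k j h
    have h2 := hd j.rev k.rev (by simp only [Fin.val_rev]; omega)
    rw [Fin.rev_rev, Fin.rev_rev, Int.gcd_comm] at h2
    linarith
  obtain ⟨k, j, hkj, hg⟩ := hcop
  have hdvd : s k ∣ c k + d k.rev := by
    have h1 : s k ∣ (c k + d k.rev) * s j := ⟨c j + d j.rev, by rw [← hf k j hkj]; ring⟩
    exact (Int.isCoprime_iff_gcd_eq_one.2 hg).dvd_of_dvd_mul_right h1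
  obtain ⟨l, hl⟩ := hdvd
  have hiff : ∀ a : ℕ, ∀ ha : a < n,
      (c ⟨a, ha⟩ + d (Fin.rev ⟨a, ha⟩) = l * s ⟨a, ha⟩ ↔
        c ⟨0, by omega⟩ + d (Fin.rev ⟨0, by omega⟩) = l * s ⟨0, by omega⟩) := by
    intro a
    induction a with
    | zero => intro ha; rfl
    | succ a ih =>
      intro ha
      rw [← ih (by omega)]
      have h := hf ⟨a, by omega⟩ ⟨a + 1, ha⟩ rfl
      have p1 := hs ⟨a, by omega⟩
      have p2 := hs ⟨a + 1, ha⟩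
      constructor
      · intro h1
        rw [h1] at h
        apply mul_right_cancel₀ p2.ne'
        rw [← h]; ring
      · intro h1
        rw [h1] at h
        apply mul_right_cancel₀ p1.ne'
        rw [h]; ring
  have hall : ∀ i : Fin n, c i + d i.rev = l * s i := by
    intro i
    exact (hiff i i.2).2 ((hiff k k.2).1 (by rw [mul_comm]; exact hl))
  have hn : 0 < n := k.pos
  refine ⟨fun j => if j = n + 1 then l else ext n 0 c j, ?_⟩
  intro a ha
  beta_reduce
  rw [if_neg (show a ≠ n + 1 by omega)]
  rcases Nat.eq_zero_or_pos a with h0 | h0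
  · subst h0
    have h1 := ext_succ n 0 c ⟨0, hn⟩
    rw [if_neg (by omega), ext_zero, ext_zero]
    rw [hc0 ⟨0, hn⟩ rfl] at h1
    simp only at h1
    rw [h1]
    simp
  · obtain ⟨b, rfl⟩ : ∃ b, a = b + 1 := ⟨a - 1, by omega⟩
    have h1 := ext_succ n 0 c ⟨b, by omega⟩
    have h2 := ext_succ n 1 s ⟨b, by omega⟩
    simp only at h1 h2
    rw [h1, h2]
    by_cases hb : b + 1 = n
    · rw [if_pos (by omega), hb, ext_last]
      have h3 := hall ⟨b, by omega⟩
      rw [hd0 (Fin.rev ⟨b, by omega⟩) (by simp only [Fin.val_rev]; omega)] at h3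
      simp
      linarith
    · have h3 := ext_succ n 0 c ⟨b + 1, by omega⟩
      have h4 := ext_succ n 1 s ⟨b + 1, by omega⟩
      simp only at h3 h4
      rw [if_neg (by omega), h3, h4]
      have := hc ⟨b, by omega⟩ ⟨b + 1, by omega⟩ rfl
      linarith

end SEul

theorem sEulerian_palindromic_iff (n : ℕ) (s : Fin n → ℤ)
    (hs : ∀ i, 0 < s i)
    (hcop : ∃ k j : Fin n, (j : ℕ) = (k : ℕ) + 1 ∧ Int.gcd (s k) (s j) = 1) :
    IsPalindromic (hStar n s) ↔
      ∃ c d : Fin n → ℤ,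
        (∀ i : Fin n, (i : ℕ) = 0 → c i = 1) ∧
        (∀ i : Fin n, (i : ℕ) = 0 → d i = 1) ∧
        (∀ k j : Fin n, (j : ℕ) = (k : ℕ) + 1 →
          c j * s k = c k * s j + (Int.gcd (s k) (s j) : ℤ)) ∧
        (∀ k j : Fin n, (j : ℕ) = (k : ℕ) + 1 →
          d j * s k.rev = d k * s j.rev + (Int.gcd (s k.rev) (s j.rev) : ℤ)) := by
  constructor
  · intro hp
    obtain ⟨C, hC0, hC⟩ := SEul.exists_C n s hs hp
    exact SEul.fwd n s C hC0 hC
  · rintro ⟨c, d, hc0, hd0, hc, hd⟩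
    obtain ⟨C, hC⟩ := SEul.bwd n s hs hcop c d hc0 hd0 hc hd
    exact SEul.pal_of n s hs C hC
end

section
/- Let s = (s_1,…,s_n) be a sequence of positive integers and let V(P_n^(s)) denote the vertex set of the s-lecture hall polytope. The map φ defined by φ(λ_1,…,λ_n) = (e_1,…,e_n) with e_i = (s_i − λ_i) mod s_i is a bijection from the set (P_n^(s) ∩ ℤ^n) \ V(P_n^(s)) of non-vertex lattice points of P_n^(s) onto the set I_{n,1}^(s) of s-inversion sequences with exactly one ascent. -/
open scoped BigOperators

theorem mono_of_step {n : ℕ} {f : Fin n → ℝ}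
    (h : ∀ i j : Fin n, (j : ℕ) = (i : ℕ) + 1 → f i ≤ f j) : Monotone f := by
  have key : ∀ k : ℕ, ∀ i j : Fin n, (j : ℕ) = (i : ℕ) + k → f i ≤ f j := by
    intro k
    induction k with
    | zero =>
      intro i j hij
      have : i = j := Fin.ext (by omega)
      rw [this]
    | succ k ih =>
      intro i j hij
      have hlt : (i : ℕ) + k < n := by have := j.isLt; omega
      exact (ih i ⟨i + k, hlt⟩ rfl).trans (h _ _ (by simp; omega))
  intro i j hij
  have : (i : ℕ) ≤ j := hij
  exact key (j - i) i j (by omega)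

theorem mem_ascSet_iff {n : ℕ} {s : Fin n → ℤ} (hs : ∀ i, 0 < s i) (e : Fin n → ℤ) (i : Fin n) :
    i ∈ ascSet n s e ↔ ((i : ℕ) = 0 ∧ 0 < e i) ∨
      ∃ j : Fin n, (i : ℕ) = (j : ℕ) + 1 ∧ e j * s i < e i * s j := by
  have hq : ∀ i, (0 : ℚ) < s i := fun i => by exact_mod_cast hs i
  unfold ascSet prevRatio
  rw [Finset.mem_filter]
  simp only [Finset.mem_univ, true_and]
  by_cases h0 : (i : ℕ) = 0
  · rw [if_pos h0]
    unfold invRatio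
    rw [lt_div_iff₀ (hq i), zero_mul]
    constructor
    · intro h
      exact Or.inl ⟨h0, by exact_mod_cast h⟩
    · rintro (⟨_, h⟩ | ⟨j, hj, _⟩)
      · exact_mod_cast h
      · omega
  · rw [if_neg h0]
    unfold invRatio
    rw [div_lt_div_iff₀ (hq _) (hq _)]
    constructor
    · intro h
      exact Or.inr ⟨⟨(i : ℕ) - 1, lt_of_le_of_lt (Nat.sub_le _ _) i.isLt⟩, by simp; omega, by exact_mod_cast h⟩
    · rintro (⟨h, _⟩ | ⟨j, hj, h⟩)
      · exact absurd h h0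
      · have : (⟨(i : ℕ) - 1, lt_of_le_of_lt (Nat.sub_le _ _) i.isLt⟩ : Fin n) = j :=
          Fin.ext (by simp; omega)
        rw [this]
        exact_mod_cast h

/-- The structure of non-vertex lattice points with first nonzero position `p`. -/
def GoodAt (n : ℕ) (s x : Fin n → ℤ) (p : Fin n) : Prop :=
  (∀ i, i < p → x i = 0) ∧ (∀ i, p ≤ i → 0 < x i ∧ x i ≤ s i) ∧ x p < s p ∧
    ∀ i j : Fin n, p ≤ i → (j : ℕ) = (i : ℕ) + 1 → x i * s j ≤ x j * s i

theorem exists_goodAt {n : ℕ} {s : Fin n → ℤ} (hs : ∀ i, 0 < s i) {x : Fin n → ℤ}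
    (hx : (fun i => (x i : ℝ)) ∈ lhp n s) (h0 : x ≠ 0) (hv : ∀ i, x ≠ lhpVertexZ n s i) :
    ∃ p, GoodAt n s x p := by
  have hq : ∀ i, (0 : ℝ) < s i := fun i => by exact_mod_cast hs i
  obtain ⟨ha, hb, hc⟩ := hx
  have hm := mono_of_step (f := fun i => (x i : ℝ) / (s i : ℝ)) hb
  have hm' : ∀ i j, i ≤ j → x i * s j ≤ x j * s i := by
    intro i j hij
    have := hm hij
    simp only at this
    rw [div_le_div_iff₀ (hq _) (hq _)] at this
    exact_mod_cast this
  have hnn : ∀ i, 0 ≤ x i := by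
    intro i
    have hn : 0 < n := by have := i.isLt; omega
    have h1 := (ha ⟨0, hn⟩ rfl).trans (hm (show (⟨0, hn⟩ : Fin n) ≤ i from Nat.zero_le _))
    simp only at h1
    rw [le_div_iff₀ (hq i), zero_mul] at h1
    exact_mod_cast h1
  have hle : ∀ i, x i ≤ s i := by
    intro i
    have hn : n - 1 < n := by have := i.isLt; omega
    have h1 := (hm (show i ≤ (⟨n - 1, hn⟩ : Fin n) from
      Nat.le_sub_one_of_lt i.isLt)).trans (hc ⟨n - 1, hn⟩ rfl)
    simp only at h1
    rw [div_le_one (hq i)] at h1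
    exact_mod_cast h1
  have hne : ∃ i, x i ≠ 0 := by
    by_contra! h
    exact h0 (funext h)
  obtain ⟨p, hp, hmin⟩ : ∃ p, x p ≠ 0 ∧ ∀ i, i < p → x i = 0 := by
    have hS : (Finset.univ.filter fun i => x i ≠ 0).Nonempty := by
      obtain ⟨i, hi⟩ := hne
      exact ⟨i, by simp [hi]⟩
    refine ⟨(Finset.univ.filter fun i => x i ≠ 0).min' hS, ?_, ?_⟩
    · have := Finset.min'_mem _ hS
      exact (Finset.mem_filter.1 this).2
    · intro i hi
      by_contra h
      exact absurd (Finset.min'_le _ i (by simp [h])) (not_le.2 hi)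
  have hpp : 0 < x p := lt_of_le_of_ne (hnn p) (Ne.symm hp)
  refine ⟨p, hmin, ?_, ?_, ?_⟩
  · intro i hi
    refine ⟨?_, hle i⟩
    have h1 := hm' p i hi
    have h2 : 0 < x i * s p := lt_of_lt_of_le (mul_pos hpp (hs i)) h1
    exact pos_of_mul_pos_left h2 (hs p).le
  · by_contra h
    have heq : x p = s p := le_antisymm (hle p) (not_lt.1 h)
    apply hv p
    funext j
    unfold lhpVertexZ
    split_ifs with hj
    · have h1 := hm' p j hj
      rw [heq, mul_comm] at h1
      exact le_antisymm (hle j) (le_of_mul_le_mul_right h1 (hs p))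
    · exact hmin j (not_le.1 hj)
  · intro i j _ hij
    exact hm' i j (by rw [Fin.le_def]; omega)

theorem image_eq {n : ℕ} {s x : Fin n → ℤ} (hs : ∀ i, 0 < s i) {p : Fin n}
    (h : GoodAt n s x p) (i : Fin n) :
    (s i - x i) % s i = if p ≤ i then s i - x i else 0 := by
  split_ifs with hi
  · have := h.2.1 i hi
    exact Int.emod_eq_of_lt (by omega) (by omega)
  · rw [h.1 i (not_le.1 hi)]
    simp

theorem ascSet_image {n : ℕ} {s x : Fin n → ℤ} (hs : ∀ i, 0 < s i) {p : Fin n}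
    (h : GoodAt n s x p) : ascSet n s (fun i => (s i - x i) % s i) = {p} := by
  ext i
  rw [mem_ascSet_iff hs, Finset.mem_singleton]
  simp only [image_eq hs h]
  have h3 := h.2.2.1
  constructor
  · rintro (⟨h1, h2⟩ | ⟨j, h1, h2⟩)
    · split_ifs at h2 with hi
      · exact Fin.ext (by rw [Fin.le_def] at hi; omega)
      · omega
    · by_contra hne
      have hne' : (i : ℕ) ≠ p := fun h => hne (Fin.ext h)
      by_cases hj : p ≤ j
      · have hi : p ≤ i := by rw [Fin.le_def] at *; omega
        rw [if_pos hj, if_pos hi] at h2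
        have := h.2.2.2 j i hj h1
        nlinarith
      · have hi : ¬ p ≤ i := by rw [Fin.le_def] at *; omega
        rw [if_neg hj, if_neg hi] at h2
        simp at h2
  · rintro rfl
    by_cases h0 : (i : ℕ) = 0
    · left
      simp [h0, h3]
    · right
      have hi := i.isLt
      refine ⟨⟨i - 1, by omega⟩, by simp; omega, ?_⟩
      rw [if_neg (by rw [Fin.le_def]; simp; omega), if_pos le_rfl, zero_mul]
      exact mul_pos (by omega) (hs _)

theorem goodAt_mem {n : ℕ} {s x : Fin n → ℤ} (hs : ∀ i, 0 < s i) {p : Fin n}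
    (h : GoodAt n s x p) : (fun i => (x i : ℝ)) ∈ lhp n s ∧
        x ≠ 0 ∧ ∀ i : Fin n, x ≠ lhpVertexZ n s i := by
  have hq : ∀ i, (0 : ℝ) < s i := fun i => by exact_mod_cast hs i
  obtain ⟨h1, h2, h3, h4⟩ := h
  have hb : ∀ i, 0 ≤ x i ∧ x i ≤ s i := by
    intro i
    by_cases hi : p ≤ i
    · exact ⟨(h2 i hi).1.le, (h2 i hi).2⟩
    · rw [h1 i (not_le.1 hi)]
      exact ⟨le_rfl, (hs i).le⟩
  have hp := (h2 p le_rfl).1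
  refine ⟨⟨?_, ?_, ?_⟩, ?_, ?_⟩
  · intro i _
    have : (0 : ℝ) ≤ x i := by exact_mod_cast (hb i).1
    exact div_nonneg this (hq i).le
  · intro i j hij
    simp only
    rw [div_le_div_iff₀ (hq _) (hq _)]
    by_cases hi : p ≤ i
    · exact_mod_cast h4 i j hi hij
    · have h5 : 0 ≤ x j * s i := mul_nonneg (hb j).1 (hs i).le
      rw [h1 i (not_le.1 hi)]
      simp only [Int.cast_zero, zero_mul]
      exact_mod_cast h5
  · intro i _
    simp only
    rw [div_le_one (hq i)]
    exact_mod_cast (hb i).2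
  · intro h
    rw [h] at hp
    simp at hp
  · intro i h
    rw [h] at hp h3
    unfold lhpVertexZ at hp h3
    split_ifs at hp h3 <;> omega

theorem goodAt_of_asc {n : ℕ} {s e : Fin n → ℤ} (hs : ∀ i, 0 < s i) (he : IsInvSeq n s e)
    {p : Fin n} (hp : ascSet n s e = {p}) :
    GoodAt n s (fun i => if p ≤ i then s i - e i else 0) p ∧ ∀ i, i < p → e i = 0 := by
  have hno : ∀ i j : Fin n, (i : ℕ) = (j : ℕ) + 1 → i ≠ p → e i * s j ≤ e j * s i := by
    intro i j hij hne
    by_contra hlt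
    have : i ∈ ascSet n s e := (mem_ascSet_iff hs e i).2 (Or.inr ⟨j, hij, not_le.1 hlt⟩)
    rw [hp, Finset.mem_singleton] at this
    exact hne this
  have hz : ∀ k : ℕ, ∀ i : Fin n, (i : ℕ) = k → i < p → e i = 0 := by
    intro k
    induction k with
    | zero =>
      intro i hi hip
      by_contra h
      have : i ∈ ascSet n s e := (mem_ascSet_iff hs e i).2
        (Or.inl ⟨hi, lt_of_le_of_ne (he i).1 (Ne.symm h)⟩)
      rw [hp, Finset.mem_singleton] at this
      exact hip.ne this
    | succ k ih =>
      intro i hi hip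
      have hlt := i.isLt
      have h0 := ih ⟨k, by omega⟩ rfl (by rw [Fin.lt_def] at *; simp; omega)
      have h1 := hno i ⟨k, by omega⟩ hi hip.ne
      rw [h0, zero_mul] at h1
      have h2 := hs ⟨k, by omega⟩
      exact le_antisymm (nonpos_of_mul_nonpos_left h1 h2) (he i).1
  have hz' : ∀ i, i < p → e i = 0 := fun i => hz i i rfl
  have hpos : 0 < e p := by
    have hmem : p ∈ ascSet n s e := by rw [hp]; simp
    rcases (mem_ascSet_iff hs e p).1 hmem with ⟨_, h⟩ | ⟨j, hj, h⟩
    · exact h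
    · rw [hz' j (by rw [Fin.lt_def]; omega), zero_mul] at h
      exact pos_of_mul_pos_left h (hs j).le
  refine ⟨⟨?_, ?_, ?_, ?_⟩, hz'⟩
  · intro i hi
    simp [not_le.2 hi]
  · intro i hi
    have := he i
    simp only [if_pos hi]
    omega
  · simp [hpos]
  · intro i j hi hij
    have hj : p ≤ j := by rw [Fin.le_def] at *; omega
    have hne : j ≠ p := by
      rintro rfl
      rw [Fin.le_def] at hi
      omega
    simp only [if_pos hi, if_pos hj]
    have := hno j i hij hne
    nlinarith

theorem lattice_points_bijOn_one_ascent (n : ℕ) (s : Fin n → ℤ)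
    (hs : ∀ i, 0 < s i) :
    Set.BijOn (fun x : Fin n → ℤ => fun i => (s i - x i) % s i)
      {x : Fin n → ℤ | (fun i => (x i : ℝ)) ∈ lhp n s ∧
        x ≠ 0 ∧ ∀ i : Fin n, x ≠ lhpVertexZ n s i}
      {e : Fin n → ℤ | IsInvSeq n s e ∧ asc n s e = 1} := by
  refine ⟨?_, ?_, ?_⟩
  · rintro x ⟨hx, h0, hv⟩
    obtain ⟨p, hp⟩ := exists_goodAt hs hx h0 hv
    refine ⟨fun i => ⟨Int.emod_nonneg _ (hs i).ne', Int.emod_lt_of_pos _ (hs i)⟩, ?_⟩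
    unfold asc
    simp only
    rw [ascSet_image hs hp, Finset.card_singleton]
  · rintro x ⟨hx, hx0, hxv⟩ y ⟨hy, hy0, hyv⟩ hxy
    obtain ⟨p, hp⟩ := exists_goodAt hs hx hx0 hxv
    obtain ⟨q, hq⟩ := exists_goodAt hs hy hy0 hyv
    simp only at hxy
    have h1 := ascSet_image hs hp
    rw [hxy, ascSet_image hs hq, Finset.singleton_inj] at h1
    subst h1
    funext i
    have h2 := congrFun hxy i
    simp only [image_eq hs hp, image_eq hs hq] at h2
    by_cases hi : q ≤ i
    · rw [if_pos hi, if_pos hi] at h2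
      omega
    · rw [hp.1 i (not_le.1 hi), hq.1 i (not_le.1 hi)]
  · rintro e ⟨he, ha⟩
    obtain ⟨p, hp⟩ := Finset.card_eq_one.1 ha
    obtain ⟨hg, hz⟩ := goodAt_of_asc hs he hp
    refine ⟨_, goodAt_mem hs hg, ?_⟩
    funext i
    simp only [image_eq hs hg]
    split_ifs with hi
    · omega
    · exact (hz i (not_le.1 hi)).symm
end

section
/- Let s = (s_1,…,s_n) be a sequence of positive integers and let k ≥ 1. For e ∈ I_{n,k}^(s), define λ(e) ∈ ℤ^{n+1} by λ(e)_j = ℓ_j·s_j − e_j for 1 ≤ j ≤ n, where ℓ_j = #(Asc(e) ∩ {0,1,…,j−1}), and λ(e)_{n+1} = k. Then e ↦ λ(e) is a bijection from I_{n,k}^(s) onto the set of lattice points of the fundamental parallelepiped Π of P_n^(s) whose last coordinate equals k. -/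
open scoped BigOperators

/-- Partial sums of `f : Fin n → M`. -/
def psum {M : Type*} [AddCommMonoid M] (n : ℕ) (f : Fin n → M) (m : ℕ) : M :=
  ∑ i : Fin n, if (i : ℕ) < m then f i else 0

lemma psum_zero {M : Type*} [AddCommMonoid M] (n : ℕ) (f : Fin n → M) : psum n f 0 = 0 := by
  simp [psum]

lemma psum_last {M : Type*} [AddCommMonoid M] (n : ℕ) (f : Fin n → M) :
    psum n f n = ∑ i, f i := by
  simp [psum]

lemma psum_succ {M : Type*} [AddCommMonoid M] (n : ℕ) (f : Fin n → M) (j : Fin n) :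
    psum n f ((j : ℕ) + 1) = psum n f j + f j := by
  have h : f j = ∑ i : Fin n, if i = j then f i else 0 := by simp
  rw [psum, psum, h, ← Finset.sum_add_distrib]
  apply Finset.sum_congr rfl
  intro i _
  by_cases hij : i = j
  · subst hij; simp
  · have : (i : ℕ) ≠ j := fun h => hij (Fin.ext h)
    have h2 : ((i : ℕ) < (j : ℕ) + 1) ↔ ((i : ℕ) < j) := by omega
    simp [h2, hij]

lemma psum_unique {M : Type*} [AddCommMonoid M] (n : ℕ) (f : Fin n → M) (S : ℕ → M)
    (h0 : S 0 = 0) (hS : ∀ j : Fin n, S ((j : ℕ) + 1) = S j + f j) (m : ℕ) (hm : m ≤ n) :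
    S m = psum n f m := by
  induction m with
  | zero => rw [h0, psum_zero]
  | succ m ih =>
    have h1 := hS ⟨m, hm⟩
    have h2 := psum_succ n f ⟨m, hm⟩
    simp only at h1 h2
    rw [h1, h2, ih (by omega)]

lemma fpp_iff (n : ℕ) (s : Fin n → ℤ) (x : Fin (n + 1) → ℝ) :
    x ∈ fpp n s ↔ ∃ S : ℕ → ℝ, S 0 = 0 ∧
      (∀ j : Fin n, S j ≤ S ((j : ℕ) + 1) ∧ S ((j : ℕ) + 1) < S j + 1) ∧
      (∀ j : Fin n, x j.castSucc = S ((j : ℕ) + 1) * s j) ∧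
      S n ≤ x (Fin.last n) ∧ x (Fin.last n) < S n + 1 := by
  have key : ∀ (a : ℝ) (b : Fin n → ℝ), (x = a • (Fin.snoc (0 : Fin n → ℝ) 1 : Fin (n + 1) → ℝ) +
        ∑ i : Fin n, b i • (Fin.snoc (lhpVertexR n s i) 1 : Fin (n + 1) → ℝ)) ↔
      ((∀ j : Fin n, x j.castSucc = psum n b ((j : ℕ) + 1) * s j) ∧
        x (Fin.last n) = a + psum n b n) := by
    intro a b
    rw [funext_iff, Fin.forall_fin_succ']
    have hsum : ∀ j : Fin n, ∑ i : Fin n, b i * lhpVertexR n s i j =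
        psum n b ((j : ℕ) + 1) * s j := by
      intro j
      rw [psum, Finset.sum_mul]
      apply Finset.sum_congr rfl
      intro i _
      have : i ≤ j ↔ (i : ℕ) < (j : ℕ) + 1 := by rw [Fin.le_def]; omega
      unfold lhpVertexR
      by_cases hij : i ≤ j
      · rw [if_pos hij, if_pos (this.1 hij)]
      · rw [if_neg hij, if_neg (fun h => hij (this.2 h))]; ring
    simp [Finset.sum_apply, hsum, psum_last]
  constructor
  · rintro ⟨a, b, ha, hb, hx⟩
    obtain ⟨h1, h2⟩ := (key a b).1 hx
    refine ⟨psum n b, psum_zero n b, ?_, h1, ?_, ?_⟩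
    · intro j
      rw [psum_succ]
      constructor <;> linarith [(hb j).1, (hb j).2]
    · linarith [ha.1]
    · linarith [ha.2]
  · rintro ⟨S, h0, hS, h1, h2, h3⟩
    have hu := psum_unique n (fun j : Fin n => S ((j : ℕ) + 1) - S j) S h0 (by intro j; ring)
    refine ⟨x (Fin.last n) - S n, fun j => S ((j : ℕ) + 1) - S j, ⟨by linarith, by linarith⟩,
      fun j => ⟨by linarith [(hS j).1], by linarith [(hS j).2]⟩, (key _ _).2 ⟨?_, ?_⟩⟩
    · intro j
      rw [h1 j, hu _ (by have := j.2; omega)]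
    · rw [← hu n le_rfl]; ring

/-- The ratio sequence, with `rat 0 = 0`. -/
def ratSeq (n : ℕ) (s e : Fin n → ℤ) : ℕ → ℚ
  | 0 => 0
  | (m + 1) => if h : m < n then invRatio n s e ⟨m, h⟩ else 0

lemma ratSeq_succ (n : ℕ) (s e : Fin n → ℤ) (j : Fin n) :
    ratSeq n s e ((j : ℕ) + 1) = invRatio n s e j := by
  simp [ratSeq]

lemma ratSeq_prev (n : ℕ) (s e : Fin n → ℤ) (j : Fin n) :
    ratSeq n s e j = prevRatio n s e j := by
  obtain ⟨j, hj⟩ := j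
  cases j with
  | zero => simp [ratSeq, prevRatio]
  | succ m =>
    have : m < n := by omega
    simp [ratSeq, prevRatio, this]

/-- ascent indicator -/
def ascInd (n : ℕ) (s e : Fin n → ℤ) (j : Fin n) : ℤ :=
  if ratSeq n s e j < ratSeq n s e ((j : ℕ) + 1) then 1 else 0

lemma card_eq_psum (n : ℕ) (s e : Fin n → ℤ) (m : ℕ) :
    (((ascSet n s e).filter fun i : Fin n => (i : ℕ) < m).card : ℤ) =
      psum n (ascInd n s e) m := by
  rw [ascSet, Finset.filter_filter, Finset.card_filter, psum]
  push_cast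
  apply Finset.sum_congr rfl
  intro i _
  rw [ascInd, ratSeq_succ, ratSeq_prev]
  split_ifs <;> simp_all

lemma asc_eq_psum (n : ℕ) (s e : Fin n → ℤ) : (asc n s e : ℤ) = psum n (ascInd n s e) n := by
  rw [← card_eq_psum, asc]
  simp

lemma lamOf_castSucc (n : ℕ) (s e : Fin n → ℤ) (j : Fin n) :
    lamOf n s e j.castSucc = psum n (ascInd n s e) ((j : ℕ) + 1) * s j - e j := by
  rw [← card_eq_psum]
  simp [lamOf, Nat.lt_succ_iff]

lemma lamOf_last (n : ℕ) (s e : Fin n → ℤ) :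
    lamOf n s e (Fin.last n) = asc n s e := by
  simp [lamOf]

lemma ratSeq_bounds (n : ℕ) (s e : Fin n → ℤ) (he : IsInvSeq n s e) (m : ℕ) :
    0 ≤ ratSeq n s e m ∧ ratSeq n s e m < 1 := by
  cases m with
  | zero => simp [ratSeq]
  | succ m =>
    by_cases h : m < n
    · obtain ⟨h1, h2⟩ := he ⟨m, h⟩
      have h3 : (0 : ℚ) < s ⟨m, h⟩ := by exact_mod_cast lt_of_le_of_lt h1 h2
      simp only [ratSeq, h, dite_true, invRatio]
      constructor
      · have : (0 : ℚ) ≤ e ⟨m, h⟩ := by exact_mod_cast h1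
        positivity
      · rw [div_lt_one h3]; exact_mod_cast h2
    · simp [ratSeq, h]

theorem invSeq_bijOn_fpp (n : ℕ) (s : Fin n → ℤ) (hs : ∀ i, 0 < s i)
    (k : ℕ) (hk : 1 ≤ k) :
    Set.BijOn (lamOf n s)
      {e : Fin n → ℤ | IsInvSeq n s e ∧ asc n s e = k}
      {x : Fin (n + 1) → ℤ |
        (fun i => (x i : ℝ)) ∈ fpp n s ∧ x (Fin.last n) = (k : ℤ)} := by
  have hsR : ∀ j, (0 : ℝ) < s j := fun j => by exact_mod_cast hs j
  refine ⟨?_, ?_, ?_⟩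
  · rintro e ⟨he, hek⟩
    refine ⟨?_, by rw [lamOf_last, hek]⟩
    rw [fpp_iff]
    refine ⟨fun m => ((psum n (ascInd n s e) m : ℤ) : ℝ) - ((ratSeq n s e m : ℚ) : ℝ),
      by simp [psum_zero, ratSeq], ?_, ?_, ?_, ?_⟩
    · intro j
      have b1 := ratSeq_bounds n s e he j
      have b2 := ratSeq_bounds n s e he ((j : ℕ) + 1)
      simp only [psum_succ]
      by_cases h : ratSeq n s e j < ratSeq n s e ((j : ℕ) + 1)
      · have hi : ascInd n s e j = 1 := by simp [ascInd, h]
        rw [hi]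
        push_cast
        have h' : ((ratSeq n s e j : ℚ) : ℝ) < ((ratSeq n s e ((j : ℕ) + 1) : ℚ) : ℝ) := by
          exact_mod_cast h
        have h1 : (0 : ℝ) ≤ ((ratSeq n s e j : ℚ) : ℝ) := by exact_mod_cast b1.1
        have h2 : ((ratSeq n s e ((j : ℕ) + 1) : ℚ) : ℝ) < 1 := by exact_mod_cast b2.2
        constructor <;> linarith
      · have hi : ascInd n s e j = 0 := by simp [ascInd, h]
        rw [hi]
        push_cast
        have h' : ((ratSeq n s e ((j : ℕ) + 1) : ℚ) : ℝ) ≤ ((ratSeq n s e j : ℚ) : ℝ) := by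
          exact_mod_cast not_lt.1 h
        have h1 : (0 : ℝ) ≤ ((ratSeq n s e ((j : ℕ) + 1) : ℚ) : ℝ) := by exact_mod_cast b2.1
        have h2 : ((ratSeq n s e j : ℚ) : ℝ) < 1 := by exact_mod_cast b1.2
        constructor <;> linarith
    · intro j
      simp only [lamOf_castSucc, ratSeq_succ, invRatio]
      have := (hsR j).ne'
      push_cast
      field_simp
    · simp only [lamOf_last, asc_eq_psum]
      have b1 := (ratSeq_bounds n s e he n).1
      have h1 : (0 : ℝ) ≤ ((ratSeq n s e n : ℚ) : ℝ) := by exact_mod_cast b1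
      linarith
    · simp only [lamOf_last, asc_eq_psum]
      have b1 := (ratSeq_bounds n s e he n).2
      have h1 : ((ratSeq n s e n : ℚ) : ℝ) < 1 := by exact_mod_cast b1
      linarith
  · rintro e ⟨he, -⟩ e' ⟨he', -⟩ hl
    have hrec : ∀ e, IsInvSeq n s e → ∀ j, e j = (-(lamOf n s e j.castSucc)) % s j := by
      intro e he j
      rw [lamOf_castSucc, neg_sub, sub_eq_add_neg, ← neg_mul, Int.add_mul_emod_self_right,
        Int.emod_eq_of_lt (he j).1 (he j).2]
    funext j
    rw [hrec e he j, hrec e' he' j, hl]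
  · rintro x ⟨hx, hxk⟩
    rw [fpp_iff] at hx
    obtain ⟨S, h0, hS, h1, h2, h3⟩ := hx
    let e : Fin n → ℤ := fun j => ⌈S ((j : ℕ) + 1)⌉ * s j - x j.castSucc
    have heR : ∀ j, (e j : ℝ) = (⌈S ((j : ℕ) + 1)⌉ - S ((j : ℕ) + 1)) * s j := by
      intro j
      simp only [e]
      push_cast
      rw [h1 j]; ring
    have he : IsInvSeq n s e := by
      intro j
      have c1 := Int.le_ceil (S ((j : ℕ) + 1))
      have c2 := Int.ceil_lt_add_one (S ((j : ℕ) + 1))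
      have hp := hsR j
      constructor
      · have : (0 : ℝ) ≤ e j := by
          rw [heR]; exact mul_nonneg (by linarith) hp.le
        exact_mod_cast this
      · have : (e j : ℝ) < s j := by
          rw [heR]; nlinarith
        exact_mod_cast this
    have hrat : ∀ m ≤ n, ((ratSeq n s e m : ℚ) : ℝ) = ⌈S m⌉ - S m := by
      intro m hm
      cases m with
      | zero => simp [ratSeq, h0]
      | succ m =>
        have := ratSeq_succ n s e ⟨m, hm⟩
        simp only at this
        rw [this, invRatio]
        push_cast
        rw [heR, mul_div_cancel_right₀ _ (hsR _).ne']
    have hceil : ∀ m ≤ n, ⌈S m⌉ = psum n (ascInd n s e) m := by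
      apply psum_unique n (ascInd n s e) (fun m => ⌈S m⌉) (by simp [h0])
      intro j
      obtain ⟨u, v⟩ := hS j
      have m1 : ⌈S j⌉ ≤ ⌈S ((j : ℕ) + 1)⌉ := Int.ceil_mono u
      have m2 : ⌈S ((j : ℕ) + 1)⌉ ≤ ⌈S j⌉ + 1 := by
        rw [← Int.ceil_add_one]; exact Int.ceil_mono v.le
      have r1 := hrat j j.2.le
      have r2 := hrat ((j : ℕ) + 1) j.2
      have hiff : ratSeq n s e j < ratSeq n s e ((j : ℕ) + 1) ↔
          (⌈S j⌉ : ℝ) - S j < ⌈S ((j : ℕ) + 1)⌉ - S ((j : ℕ) + 1) := by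
        rw [← r1, ← r2]; exact Rat.cast_lt.symm
      simp only [ascInd, hiff]
      have hc : ⌈S ((j : ℕ) + 1)⌉ = ⌈S j⌉ ∨ ⌈S ((j : ℕ) + 1)⌉ = ⌈S j⌉ + 1 := by omega
      rcases hc with hc | hc
      · rw [hc, if_neg (by linarith)]; ring
      · rw [hc, if_pos (by push_cast; linarith)]
    have hasc : (asc n s e : ℤ) = k := by
      rw [asc_eq_psum, ← hceil n le_rfl, Int.ceil_eq_iff, ← hxk]
      exact ⟨by linarith, h2⟩
    refine ⟨e, ⟨he, by exact_mod_cast hasc⟩, ?_⟩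
    funext j
    refine Fin.lastCases ?_ (fun j => ?_) j
    · rw [lamOf_last, hasc, hxk]
    · rw [lamOf_castSucc, ← hceil _ j.2]
      simp only [e]; ring
end

section
/- Let s = (s_1,…,s_n) be a sequence of positive integers and let k ≥ 1. For e ∈ I_n^(s), define λ(e) ∈ ℤ^{n+1} by λ(e)_j = ℓ_j·s_j − e_j for 1 ≤ j ≤ n, where ℓ_j = #(Asc(e) ∩ {0,1,…,j−1}), and λ(e)_{n+1} = asc(e). If f ∈ I_{n,k−1}^(s), g ∈ I_{n,1}^(s), and the componentwise-mod-s sum f + g lies in I_{n,k}^(s), then λ(f + g) = λ(f) + λ(g) in ℤ^{n+1}. -/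
open scoped BigOperators

/-- Number of ascents up to position `j`. -/
def ascCount (n : ℕ) (s e : Fin n → ℤ) (j : Fin n) : ℤ :=
  (((ascSet n s e).filter fun i : Fin n => (i : ℕ) ≤ (j : ℕ)).card : ℤ)

theorem ascCount_zero (N : ℕ) (s e : Fin (N + 1) → ℤ) :
    ascCount (N + 1) s e 0 = if 0 < invRatio (N + 1) s e 0 then 1 else 0 := by
  have h : ((ascSet (N + 1) s e).filter fun i : Fin (N + 1) => (i : ℕ) ≤ ((0 : Fin (N + 1)) : ℕ))
      = if 0 < invRatio (N + 1) s e 0 then {0} else ∅ := by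
    ext i
    have hi : (i : ℕ) ≤ ((0 : Fin (N + 1)) : ℕ) ↔ i = 0 := by
      rw [Fin.ext_iff]; simp
    rw [Finset.mem_filter, hi]
    split_ifs with h
    · constructor
      · rintro ⟨_, rfl⟩; simp
      · intro h'
        rw [Finset.mem_singleton] at h'
        subst h'
        simp [ascSet, prevRatio, h]
    · constructor
      · rintro ⟨h', rfl⟩
        simp [ascSet, prevRatio] at h'
        exact absurd h' h
      · intro h'; simp at h'
  unfold ascCount
  rw [h]
  split_ifs <;> simp

theorem ascCount_succ (N : ℕ) (s e : Fin (N + 1) → ℤ) (i : Fin N) :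
    ascCount (N + 1) s e i.succ = ascCount (N + 1) s e i.castSucc +
      if invRatio (N + 1) s e i.castSucc < invRatio (N + 1) s e i.succ then 1 else 0 := by
  have hp : prevRatio (N + 1) s e i.succ = invRatio (N + 1) s e i.castSucc := by
    simp [prevRatio]
    rfl
  have hmem : i.succ ∈ ascSet (N + 1) s e ↔
      invRatio (N + 1) s e i.castSucc < invRatio (N + 1) s e i.succ := by
    simp [ascSet, hp]
  have hle : ∀ j : Fin (N + 1), (j : ℕ) ≤ (i.succ : ℕ) ↔ ((j : ℕ) ≤ (i.castSucc : ℕ) ∨ j = i.succ) := by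
    intro j
    rw [Fin.ext_iff]; simp; omega
  unfold ascCount
  simp only [hle]
  rw [Finset.filter_or, Finset.card_union_of_disjoint, Finset.filter_eq']
  · simp only [hmem]
    split_ifs <;> simp
  · rw [Finset.disjoint_left]
    intro j h1 h2
    rw [Finset.mem_filter] at h1 h2
    have := h1.2
    rw [h2.2] at this
    simp at this

theorem ascCount_last (N : ℕ) (s e : Fin (N + 1) → ℤ) :
    ascCount (N + 1) s e (Fin.last N) = asc (N + 1) s e := by
  unfold ascCount asc
  rw [Finset.filter_true_of_mem]
  intro i _
  simpa using Nat.le_of_lt_succ i.isLt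

theorem ratio_facts (n : ℕ) (s : Fin n → ℤ) (hs : ∀ i, 0 < s i) (f g : Fin n → ℤ)
    (hf : IsInvSeq n s f) (hg : IsInvSeq n s g) (j : Fin n) :
    (0 ≤ invRatio n s f j ∧ invRatio n s f j < 1) ∧ (0 ≤ invRatio n s g j ∧ invRatio n s g j < 1) ∧
    (0 ≤ invRatio n s (invAdd n s f g) j ∧ invRatio n s (invAdd n s f g) j < 1) ∧
    invRatio n s f j + invRatio n s g j =
      invRatio n s (invAdd n s f g) j + (((f j + g j) / s j : ℤ) : ℚ) ∧
    ((f j + g j) / s j = 0 ∨ (f j + g j) / s j = 1) := by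
  have hb : ∀ e : Fin n → ℤ, IsInvSeq n s e → 0 ≤ invRatio n s e j ∧ invRatio n s e j < 1 := by
    intro e he
    have hsq : (0 : ℚ) < s j := by exact_mod_cast hs j
    unfold invRatio
    refine ⟨div_nonneg (by exact_mod_cast (he j).1) hsq.le, ?_⟩
    rw [div_lt_one hsq]
    exact_mod_cast (he j).2
  have hh : IsInvSeq n s (invAdd n s f g) := fun i =>
    ⟨Int.emod_nonneg _ (hs i).ne', Int.emod_lt_of_pos _ (hs i)⟩
  refine ⟨hb f hf, hb g hg, hb _ hh, ?_, ?_⟩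
  · have hsq : (s j : ℚ) ≠ 0 := by exact_mod_cast (hs j).ne'
    have := Int.emod_add_mul_ediv (f j + g j) (s j)
    unfold invRatio invAdd
    field_simp
    exact_mod_cast this.symm
  · have h1 : 0 ≤ (f j + g j) / s j :=
      Int.ediv_nonneg (add_nonneg (hf j).1 (hg j).1) (hs j).le
    have h2 : (f j + g j) / s j < 2 := by
      apply Int.ediv_lt_of_lt_mul (hs j)
      linarith [(hf j).2, (hg j).2]
    omega

theorem lamOf_add (n : ℕ) (s : Fin n → ℤ) (hs : ∀ i, 0 < s i)
    (k : ℕ) (hk : 1 ≤ k) (f g : Fin n → ℤ)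
    (hf : IsInvSeq n s f) (hg : IsInvSeq n s g)
    (hfk : asc n s f = k - 1) (hg1 : asc n s g = 1)
    (hsum : asc n s (invAdd n s f g) = k) :
    lamOf n s (invAdd n s f g) = lamOf n s f + lamOf n s g := by
  obtain _ | N := n
  · simp [asc, ascSet] at hg1
  set h := invAdd (N + 1) s f g with hh
  let d : Fin (N + 1) → ℤ := fun j => ascCount (N + 1) s f j + ascCount (N + 1) s g j
    - (f j + g j) / s j - ascCount (N + 1) s h j
  have key := ratio_facts (N + 1) s hs f g hf hg
  have hd0 : 0 ≤ d 0 := by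
    simp only [d, ascCount_zero]
    obtain ⟨⟨a1, a2⟩, ⟨b1, b2⟩, ⟨c1, c2⟩, e, hc⟩ := key 0
    rw [← hh] at c1 c2 e
    rcases hc with hc | hc <;> rw [hc] at e ⊢ <;> push_cast at e <;>
      split_ifs <;> first | norm_num; done | (exfalso; linarith)
  have hmono : Monotone d := by
    rw [Fin.monotone_iff_le_succ]
    intro i
    simp only [d, ascCount_succ]
    obtain ⟨⟨a1, a2⟩, ⟨b1, b2⟩, ⟨c1, c2⟩, e, hc⟩ := key i.castSucc
    obtain ⟨⟨a1', a2'⟩, ⟨b1', b2'⟩, ⟨c1', c2'⟩, e', hc'⟩ := key i.succ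
    rw [← hh] at c1 c2 e c1' c2' e'
    rcases hc with hc | hc <;> rcases hc' with hc' | hc' <;> rw [hc] at e ⊢ <;>
      rw [hc'] at e' ⊢ <;> push_cast at e e' <;>
      split_ifs <;> first | linarith | (exfalso; linarith)
  have hlast : d (Fin.last N) ≤ 0 := by
    simp only [d, ascCount_last, hfk, hg1, hsum]
    rcases (key (Fin.last N)).2.2.2.2 with hc | hc <;> rw [hc] <;> omega
  have hd : ∀ j, d j = 0 := fun j =>
    le_antisymm ((hmono (Fin.le_last j)).trans hlast) (hd0.trans (hmono (Fin.zero_le j)))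
  funext j
  refine Fin.lastCases ?_ (fun j => ?_) j
  · simp only [lamOf, Pi.add_apply, Fin.snoc_last, hfk, hg1, hsum]
    omega
  · simp only [lamOf, Pi.add_apply, Fin.snoc_castSucc]
    have h1 := hd j
    have h2 : h j + s j * ((f j + g j) / s j) = f j + g j := Int.emod_add_mul_ediv _ _
    simp only [d] at h1
    change ascCount (N + 1) s h j * s j - h j = (ascCount (N + 1) s f j * s j - f j) +
      (ascCount (N + 1) s g j * s j - g j)
    linear_combination (-(s j)) * h1 - h2
end
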